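/- arXiv:1907.04585 — 7 statements merged into one kernel-verified Lean document; each statement's English description precedes it below -/
import Mathlib

section
/- Let t ≥ 2 be an integer, let α ∈ (0, 1/2) be a real, and let G be a connected P_t-free graph with a weight function w : V(G) → ℕ. Then there exists a nonempty set B ⊆ V(G) with |B| ≤ t − 1 such that every connected component C of G − N[B] satisfies w(C) ≤ (1−α) · w(G). -/
noncomputable section

namespace Paper

/-- The closed neighborhood `N[X]` of a set `X` of vertices. -/
def closedNbhd {V : Type} (G : SimpleGraph V) (X : Set V) : Set V :=
  {v | v ∈ X ∨ ∃ x ∈ X, G.Adj x v}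

/-- The total weight `w(X)` of a set of vertices. -/
def wsum {V : Type} (w : V → ℕ) (X : Set V) : ℕ := ∑ᶠ x ∈ X, w x

/-- `p : Fin m → V` is an induced path in `G` (on `m` vertices). -/
def InducedPathFun {V : Type} (G : SimpleGraph V) {m : ℕ} (p : Fin m → V) : Prop :=
  Function.Injective p ∧
    ∀ i j : Fin m, G.Adj (p i) (p j) ↔ ((i : ℕ) + 1 = (j : ℕ) ∨ (j : ℕ) + 1 = (i : ℕ))

/-- `G` is `P_t`-free: it contains no induced path on `t` vertices. -/
def PtFree {V : Type} (G : SimpleGraph V) (t : ℕ) : Prop :=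
  ∀ p : Fin t → V, ¬ InducedPathFun G p

/-- `C` is a connected component of `G - X`. -/
def IsCompOfDel {V : Type} (G : SimpleGraph V) (X : Set V) (C : Set V) : Prop :=
  ∃ v : ↥(Xᶜ), C = Subtype.val '' {u : ↥(Xᶜ) | (G.induce Xᶜ).Reachable u v}

theorem reach_closed {V : Type} {G : SimpleGraph V} {u v : V} (h : G.Reachable u v)
    (Q : V → Prop) (hQ : ∀ x y, Q x → G.Adj x y → Q y) (hu : Q u) : Q v := by
  obtain ⟨p⟩ := h
  induction p with
  | nil => exact hu
  | cons hadj _ ih => exact ih (hQ _ _ hu hadj)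

theorem comp_disj {V : Type} {G : SimpleGraph V} {X C : Set V} (h : IsCompOfDel G X C)
    {a : V} (ha : a ∈ C) : a ∉ X := by
  obtain ⟨v, rfl⟩ := h
  obtain ⟨u, _, rfl⟩ := ha
  exact u.2

theorem comp_closed {V : Type} {G : SimpleGraph V} {X C : Set V} (h : IsCompOfDel G X C)
    {a b : V} (ha : a ∈ C) (hab : G.Adj a b) (hb : b ∉ X) : b ∈ C := by
  obtain ⟨v, rfl⟩ := h
  obtain ⟨u, hu, rfl⟩ := ha
  refine ⟨⟨b, hb⟩, ?_, rfl⟩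
  have h1 : (G.induce Xᶜ).Adj ⟨b, hb⟩ u := by simpa using hab.symm
  exact h1.reachable.trans hu

theorem comp_cut {V : Type} {G : SimpleGraph V} {X C : Set V} (h : IsCompOfDel G X C)
    {y a : V} (hy : y ∈ C) (ha : a ∈ C) (S : Set V) (hyS : y ∈ S) (haS : a ∉ S) :
    ∃ x ∈ S, x ∈ C ∧ ∃ z ∈ C, z ∉ S ∧ G.Adj x z := by
  by_contra hcon
  push Not at hcon
  have hcl := @comp_closed V G X C h
  obtain ⟨v, hC⟩ := h
  have hy' := hy
  have ha' := ha
  rw [hC] at hy' ha'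
  obtain ⟨y', hyr, rfl⟩ := hy'
  obtain ⟨a', har, rfl⟩ := ha'
  have hr : (G.induce Xᶜ).Reachable y' a' := SimpleGraph.Reachable.trans hyr
    (SimpleGraph.Reachable.symm har)
  have := reach_closed hr (fun u => u.1 ∈ S ∧ u.1 ∈ C) (by
    rintro x z ⟨hxS, hxC⟩ hxz
    have hxz' : G.Adj x.1 z.1 := by simpa using hxz
    have hzC := hcl hxC hxz' z.2
    refine ⟨?_, hzC⟩
    by_contra hz
    exact hcon _ hxS hxC _ hzC hz hxz') ⟨hyS, hy⟩
  exact haS this.1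

theorem wsum_add_le {V : Type} [Fintype V] (w : V → ℕ) (A C : Set V)
    (h : ∀ a ∈ A, a ∉ C) : wsum w A + wsum w C ≤ wsum w Set.univ := by
  unfold wsum
  rw [← finsum_mem_union (Set.disjoint_left.2 h) (Set.toFinite _) (Set.toFinite _)]
  rw [finsum_mem_eq_finite_toFinset_sum _ (Set.toFinite _),
    finsum_mem_eq_finite_toFinset_sum _ (Set.toFinite _)]
  apply Finset.sum_le_sum_of_subset
  intro x; simp

theorem gyarfas {V : Type} [Fintype V] (t : ℕ) (G : SimpleGraph V)
    (hconn : G.Connected) (w : V → ℕ) (hW : 0 < wsum w Set.univ)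
    (hbig : ∀ B : Set V, B.Nonempty → B.ncard ≤ t - 1 →
      ∃ C, IsCompOfDel G (closedNbhd G B) C ∧ wsum w Set.univ < 2 * wsum w C) (k : ℕ) (hk : k < t) :
    ∃ (p : ℕ → V) (A : Set V),
      (∀ i j, i ≤ k → j ≤ k → p i = p j → i = j) ∧
      (∀ i j, i ≤ k → j ≤ k → (G.Adj (p i) (p j) ↔ (i + 1 = j ∨ j + 1 = i))) ∧
      (∀ i < k, ∀ a ∈ A, a ≠ p i ∧ ¬ G.Adj (p i) a) ∧
      wsum w Set.univ < 2 * wsum w A ∧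
      (∀ S : Set V, p k ∈ S → ∀ a ∈ A, a ∉ S →
        ∃ x ∈ S, (x ∈ A ∨ x = p k) ∧ ∃ z ∈ A, z ∉ S ∧ G.Adj x z) := by
  induction k with
  | zero =>
    obtain ⟨v⟩ := hconn.nonempty
    refine ⟨fun _ => v, Set.univ, ?_, ?_, ?_, by omega, ?_⟩
    · intro i j hi hj _; omega
    · intro i j hi hj
      have : ¬ (i + 1 = j ∨ j + 1 = i) := by omega
      simp [this]
    · intro i hi; omega
    · intro S hS a _ ha
      by_contra hcon
      push Not at hcon
      exact ha (reach_closed (hconn.preconnected v a) (· ∈ S) (by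
        intro x z hx hxz
        by_contra hz
        exact hcon x hx (Or.inl trivial) z trivial hz hxz) hS)
  | succ k ih =>
    obtain ⟨p, A, hinj, hadj, hdis, hA, hcut⟩ := ih (by omega)
    obtain ⟨C, hC, hCw⟩ := hbig (p '' Set.Iic k) ⟨p 0, 0, by simp, rfl⟩ (by
      refine (Set.ncard_image_le (Set.finite_Iic k)).trans ?_
      rw [← Finset.coe_Iic, Set.ncard_coe_finset]
      simp; omega)
    have hCd : ∀ i ≤ k, ∀ c ∈ C, c ≠ p i ∧ ¬ G.Adj (p i) c := by
      intro i hi c hc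
      have := comp_disj hC hc
      constructor
      · rintro rfl
        exact this (Or.inl ⟨i, hi, rfl⟩)
      · intro h
        exact this (Or.inr ⟨p i, ⟨i, hi, rfl⟩, h⟩)
    have hmeet : ∃ a ∈ A, a ∈ C := by
      by_contra hcon
      push Not at hcon
      have := wsum_add_le w A C hcon
      omega
    obtain ⟨a, haA, haC⟩ := hmeet
    obtain ⟨x, hxC, hxA, y, hyA, hyC, hxy⟩ := hcut Cᶜ
      (fun h => (hCd k le_rfl _ h).1 rfl) a haA (fun h => h haC)
    have hyC : y ∈ C := by simpa using hyC
    have hxp : x ≠ p k := by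
      rintro rfl
      exact (hCd k le_rfl _ hyC).2 hxy
    replace hxA : x ∈ A := hxA.resolve_right hxp
    have hxN : x ∈ closedNbhd G (p '' Set.Iic k) := by
      by_contra h
      exact hxC (comp_closed hC hyC hxy.symm h)
    have hxne : ∀ i ≤ k, x ≠ p i := by
      intro i hi
      rcases hi.lt_or_eq with h | rfl
      · exact (hdis i h x hxA).1
      · exact hxp
    have hxadj : ∀ i ≤ k, (G.Adj (p i) x ↔ i = k) := by
      intro i hi
      constructor
      · intro h
        by_contra hne
        exact (hdis i (by omega) x hxA).2 h
      · rintro rfl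
        rcases hxN with ⟨j, hj, rfl⟩ | ⟨_, ⟨j, hj, rfl⟩, h⟩
        · exact absurd rfl (hxne j hj)
        · have hj : j ≤ i := hj
          rcases hj.lt_or_eq with h' | rfl
          · exact absurd h (hdis j h' x hxA).2
          · exact h
    have hp : ∀ i ≤ k, Function.update p (k+1) x i = p i := by
      intro i hi
      exact Function.update_of_ne (by omega) _ _
    have hp' : Function.update p (k+1) x (k+1) = x := Function.update_self _ _ _
    refine ⟨Function.update p (k+1) x, C, ?_, ?_, ?_, hCw, ?_⟩
    · intro i j hi hj
      rcases Nat.le_succ_iff.1 hi with hi | rfl <;> rcases Nat.le_succ_iff.1 hj with hj | rfl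
      · rw [hp i hi, hp j hj]; exact hinj i j hi hj
      · rw [hp i hi, hp']; intro h; exact absurd h.symm (hxne i hi)
      · rw [hp j hj, hp']; intro h; exact absurd h (hxne j hj)
      · intro _; rfl
    · intro i j hi hj
      rcases Nat.le_succ_iff.1 hi with hi | rfl <;> rcases Nat.le_succ_iff.1 hj with hj | rfl
      · rw [hp i hi, hp j hj]; exact hadj i j hi hj
      · rw [hp i hi, hp', hxadj i hi]; omega
      · rw [hp j hj, hp', G.adj_comm, hxadj j hj]; omega
      · simp
    · intro i hi
      rw [hp i (by omega)]
      exact hCd i (by omega)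
    · rw [hp']
      intro S hS a ha haS
      by_cases hyS : y ∈ S
      · obtain ⟨x', h1, h2, h3⟩ := comp_cut hC hyC ha S hyS haS
        exact ⟨x', h1, Or.inl h2, h3⟩
      · exact ⟨x, hS, Or.inr rfl, y, hyC, hyS, hxy⟩

/-- in a connected `P_t`-free graph `G` with weight function `w` and every
real `α ∈ (0,1/2)`, there is a nonempty set `B` of at most `t-1` vertices such that every
connected component of `G - N[B]` has weight at most `(1-α)·w(G)`. -/
theorem stmt2 {V : Type} [Fintype V] (t : ℕ) (ht : 2 ≤ t) (G : SimpleGraph V)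
    (hconn : G.Connected) (hfree : PtFree G t) (w : V → ℕ)
    (α : ℝ) (hα0 : 0 < α) (hα1 : α < 1 / 2) :
    ∃ B : Set V, B.Nonempty ∧ B.ncard ≤ t - 1 ∧
      ∀ C : Set V, IsCompOfDel G (closedNbhd G B) C →
        (wsum w C : ℝ) ≤ (1 - α) * (wsum w Set.univ : ℝ) := by
  by_contra hcon
  push Not at hcon
  have hle : ∀ C, wsum w C ≤ wsum w Set.univ := by
    intro C
    have := wsum_add_le w C Cᶜ (fun a h h' => h' h)
    omega
  have hbig : ∀ B : Set V, B.Nonempty → B.ncard ≤ t - 1 →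
      ∃ C, IsCompOfDel G (closedNbhd G B) C ∧ wsum w Set.univ < 2 * wsum w C := by
    intro B h1 h2
    obtain ⟨C, hC, h⟩ := hcon B h1 h2
    refine ⟨C, hC, ?_⟩
    have h0 : (0 : ℝ) ≤ (wsum w Set.univ : ℝ) := Nat.cast_nonneg _
    have : (wsum w Set.univ : ℝ) < 2 * wsum w C := by nlinarith
    exact_mod_cast this
  have hW : 0 < wsum w Set.univ := by
    obtain ⟨v⟩ := hconn.nonempty
    obtain ⟨C, _, h⟩ := hbig {v} ⟨v, rfl⟩ (by rw [Set.ncard_singleton]; omega)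
    have := hle C
    omega
  obtain ⟨p, A, hinj, hadj, -⟩ := gyarfas t G hconn w hW hbig (t - 1) (by omega)
  refine hfree (fun i => p i) ⟨?_, ?_⟩
  · intro i j h
    exact Fin.ext (hinj i j (by omega) (by omega) h)
  · intro i j
    exact hadj i j (by omega) (by omega)

end Paper
end
end

section
/- Let t ≥ 2 be an integer and let G be a connected P_t-free graph on n ≥ 16 vertices such that |N[v]| ≤ (1/(4(t−1))) · √n for every vertex v of G. Then there exists a set X ⊆ V(G) such that every connected component C of G − X satisfies |V(C)| ≤ n − √n, and moreover |X| ≤ n^{−1/2} · (n − |V(C)|) for every connected component C of G − X. -/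
noncomputable section

namespace Paper

lemma nb_card {V : Type} [Fintype V] (G : SimpleGraph V) (d : ℝ)
    (hd : ∀ v : V, ((closedNbhd G {v}).ncard : ℝ) ≤ d) (p : ℕ → V) (k : ℕ) :
    ((closedNbhd G {v | ∃ i < k, v = p i}).ncard : ℝ) ≤ k * d := by
  induction k with
  | zero =>
    have : closedNbhd G {v | ∃ i < 0, v = p i} = ∅ := by
      ext v; simp [closedNbhd]
    rw [this]; simp
  | succ k ih =>
    have h : closedNbhd G {v | ∃ i < k + 1, v = p i} ⊆
        closedNbhd G {v | ∃ i < k, v = p i} ∪ closedNbhd G {p k} := by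
      intro v hv
      simp only [closedNbhd, Set.mem_ofPred_eq, Set.mem_union, Set.mem_singleton_iff] at hv ⊢
      rcases hv with ⟨i, hi, rfl⟩ | ⟨x, ⟨i, hi, rfl⟩, hx⟩
      · rcases Nat.lt_succ_iff_lt_or_eq.mp hi with h | rfl
        · exact Or.inl (Or.inl ⟨i, h, rfl⟩)
        · exact Or.inr (Or.inl rfl)
      · rcases Nat.lt_succ_iff_lt_or_eq.mp hi with h | rfl
        · exact Or.inl (Or.inr ⟨_, ⟨i, h, rfl⟩, hx⟩)
        · exact Or.inr (Or.inr ⟨_, rfl, hx⟩)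
    have h1 := (Set.ncard_le_ncard h (Set.toFinite _)).trans (Set.ncard_union_le _ _)
    have h2 : ((closedNbhd G {v | ∃ i < k + 1, v = p i}).ncard : ℝ) ≤
        (closedNbhd G {v | ∃ i < k, v = p i}).ncard + (closedNbhd G {p k}).ncard := by
      exact_mod_cast h1
    have := hd (p k)
    push_cast
    linarith

lemma comp_props {V : Type} (G : SimpleGraph V) (X C : Set V) (h : IsCompOfDel G X C) :
    (∀ x ∈ C, x ∉ X) ∧ (∀ x ∈ C, ∀ y, G.Adj x y → y ∉ X → y ∈ C) ∧
    (∀ D : Set V, (∃ x ∈ C, x ∈ D) → (∀ x ∈ C, x ∈ D → ∀ y ∈ C, G.Adj x y → y ∈ D) → C ⊆ D) := by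
  obtain ⟨v, rfl⟩ := h
  refine ⟨?_, ?_, ?_⟩
  · rintro _ ⟨u, -, rfl⟩
    exact u.2
  · rintro _ ⟨u, hu, rfl⟩ y hy hyX
    refine ⟨⟨y, hyX⟩, ?_, rfl⟩
    have : (G.induce Xᶜ).Adj ⟨y, hyX⟩ u := hy.symm
    exact this.reachable.trans hu
  · rintro D ⟨_, ⟨u, hu, rfl⟩, huD⟩ hD _ ⟨w, hw, rfl⟩
    have key : ∀ a b : ↥(Xᶜ), (G.induce Xᶜ).Walk a b → (G.induce Xᶜ).Reachable a v →
        a.1 ∈ D → b.1 ∈ D := by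
      intro a b W
      induction W with
      | nil => intro _ h; exact h
      | @cons a c b hac W ih =>
        intro ha haD
        have hc : (G.induce Xᶜ).Reachable c v := hac.symm.reachable.trans ha
        exact ih hc (hD a.1 ⟨a, ha, rfl⟩ haD c.1 ⟨c, hc, rfl⟩ hac)
    have huw : (G.induce Xᶜ).Reachable u w := SimpleGraph.Reachable.trans hu (SimpleGraph.Reachable.symm hw)
    obtain ⟨W⟩ := huw
    exact key u w W hu huD

lemma build {V : Type} [Fintype V] (t : ℕ) (G : SimpleGraph V) (hconn : G.Connected)
    (hbig : ∀ (p : ℕ → V) (k : ℕ), k + 1 ≤ t → ∃ C,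
      IsCompOfDel G (closedNbhd G {v | ∃ i < k, v = p i}) C ∧ Fintype.card V < 2 * C.ncard) (k : ℕ)
      (hk : k + 1 ≤ t) :
    ∃ (p : ℕ → V) (C : Set V),
      (∀ i ≤ k, ∀ j ≤ k, p i = p j → i = j) ∧
      (∀ i ≤ k, ∀ j ≤ k, (G.Adj (p i) (p j) ↔ (i + 1 = j ∨ j + 1 = i))) ∧
      IsCompOfDel G (closedNbhd G {v | ∃ i < k, v = p i}) C ∧ Fintype.card V < 2 * C.ncard ∧
      ∃ w ∈ C, w = p k ∨ G.Adj (p k) w := by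
  induction k with
  | zero =>
    obtain ⟨v⟩ := hconn.nonempty
    obtain ⟨C, hC, hc⟩ := hbig (fun _ => v) 0 hk
    have hne : C.Nonempty := by
      rw [← Set.ncard_pos (Set.toFinite _)]; omega
    obtain ⟨w, hw⟩ := hne
    refine ⟨fun _ => w, C, ?_, ?_, ?_, hc, w, hw, Or.inl rfl⟩
    · intro i hi j hj _; omega
    · intro i hi j hj
      simp only [SimpleGraph.irrefl, false_iff]; omega
    · simpa using hC
  | succ k ih =>
    obtain ⟨p, C, hinj, hadj, hC, hc, w, hw, hwp⟩ := ih (by omega)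
    obtain ⟨C', hC', hc'⟩ := hbig p (k + 1) hk
    obtain ⟨a1, a2, a3⟩ := comp_props G _ _ hC
    obtain ⟨b1, b2, b3⟩ := comp_props G _ _ hC'
    have hint : ∃ x ∈ C', x ∈ C := by
      by_contra! hcon
      have hdis : Disjoint C' C := Set.disjoint_left.mpr hcon
      have h1 := Set.ncard_union_eq hdis (Set.toFinite _) (Set.toFinite _)
      have h2 : (C' ∪ C).ncard ≤ Fintype.card V := by
        rw [← Nat.card_eq_fintype_card]; exact Set.ncard_le_card _
      omega
    have hmono : closedNbhd G {v | ∃ i < k, v = p i} ⊆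
        closedNbhd G {v | ∃ i < k + 1, v = p i} := by
      rintro v (⟨i, hi, rfl⟩ | ⟨x, ⟨i, hi, rfl⟩, hx⟩)
      · exact Or.inl ⟨i, by omega, rfl⟩
      · exact Or.inr ⟨_, ⟨i, by omega, rfl⟩, hx⟩
    have hsub : C' ⊆ C := b3 C hint fun x _ hxC y hy hxy =>
      a2 x hxC y hxy fun h => b1 y hy (hmono h)
    have hwC' : w ∉ C' := by
      intro h
      apply b1 w h
      rcases hwp with rfl | h'
      · exact Or.inl ⟨k, by omega, rfl⟩
      · exact Or.inr ⟨_, ⟨k, by omega, rfl⟩, h'⟩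
    have hbd : ∃ x ∈ C', ∃ u ∈ C, G.Adj x u ∧ u ∉ C' := by
      by_contra! hcon
      obtain ⟨x, hx', hx⟩ := hint
      exact hwC' (a3 C' ⟨x, hx, hx'⟩ (fun x _ hx y hy hxy => hcon x hx y hy hxy) hw)
    obtain ⟨x, hx, u, hu, hxu, hu'⟩ := hbd
    have huX : u ∈ closedNbhd G {v | ∃ i < k + 1, v = p i} := by
      by_contra h; exact hu' (b2 x hx u hxu h)
    have hun : ∀ i < k, u ≠ p i ∧ ¬ G.Adj (p i) u := by
      intro i hi
      exact ⟨fun h => a1 u hu (Or.inl ⟨i, hi, h⟩), fun h => a1 u hu (Or.inr ⟨_, ⟨i, hi, rfl⟩, h⟩)⟩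
    have huk : u ≠ p k := by
      rintro rfl
      exact b1 x hx (Or.inr ⟨_, ⟨k, by omega, rfl⟩, hxu.symm⟩)
    have huadj : G.Adj (p k) u := by
      rcases huX with ⟨i, hi, h⟩ | ⟨_, ⟨i, hi, rfl⟩, h⟩
      · rcases Nat.lt_succ_iff_lt_or_eq.mp hi with h2 | rfl
        · exact absurd h (hun i h2).1
        · exact absurd h huk
      · rcases Nat.lt_succ_iff_lt_or_eq.mp hi with h2 | rfl
        · exact absurd h (hun i h2).2
        · exact h
    have hune : ∀ i ≤ k, u ≠ p i := by
      intro i hi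
      rcases Nat.lt_or_eq_of_le hi with h | rfl
      · exact (hun i h).1
      · exact huk
    have huad : ∀ i ≤ k, (G.Adj (p i) u ↔ i = k) := by
      intro i hi
      rcases Nat.lt_or_eq_of_le hi with h | rfl
      · exact ⟨fun h' => absurd h' (hun i h).2, fun h' => by omega⟩
      · simp [huadj]
    let q : ℕ → V := fun i => if i ≤ k then p i else u
    have q1 : ∀ i ≤ k, q i = p i := fun i hi => if_pos hi
    have q2 : q (k + 1) = u := if_neg (by omega)
    have hset : {v | ∃ i < k + 1, v = q i} = {v | ∃ i < k + 1, v = p i} := by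
      ext v
      constructor
      · rintro ⟨i, hi, h⟩; exact ⟨i, hi, by rw [h, q1 i (by omega)]⟩
      · rintro ⟨i, hi, h⟩; exact ⟨i, hi, by rw [h, q1 i (by omega)]⟩
    refine ⟨q, C', ?_, ?_, by rw [hset]; exact hC', hc', x, hx, Or.inr (by rw [q2]; exact hxu.symm)⟩
    · intro i hi j hj h
      rcases Nat.le_or_eq_of_le_succ hi with hi | rfl <;>
        rcases Nat.le_or_eq_of_le_succ hj with hj | rfl
      · rw [q1 i hi, q1 j hj] at h; exact hinj i hi j hj h
      · rw [q1 i hi] at h; exact absurd (q2.symm.trans h.symm) (hune i hi)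
      · rw [q1 j hj] at h; exact absurd (q2.symm.trans h) (hune j hj)
      · rfl
    · intro i hi j hj
      rcases Nat.le_or_eq_of_le_succ hi with hi | rfl <;>
        rcases Nat.le_or_eq_of_le_succ hj with hj | rfl
      · rw [q1 i hi, q1 j hj]; exact hadj i hi j hj
      · rw [q1 i hi]
        change G.Adj (p i) (q (k + 1)) ↔ _
        rw [q2, huad i hi]; omega
      · rw [q1 j hj]
        change G.Adj (q (k + 1)) (p j) ↔ _
        rw [q2, SimpleGraph.adj_comm, huad j hj]; omega
      · simp

/-- if `G` is a connected `P_t`-free graph on `n ≥ 16` vertices with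
`|N[v]| ≤ (1/(4(t-1)))·√n` for every vertex `v`, then there is a set `X` of vertices
such that every connected component `C` of `G - X` satisfies `|C| ≤ n - √n` and
`|X| ≤ n^{-1/2}·(n - |C|)`. -/
theorem stmt3 {V : Type} [Fintype V] (t : ℕ) (ht : 2 ≤ t) (G : SimpleGraph V)
    (hconn : G.Connected) (hfree : PtFree G t) (hn : 16 ≤ Fintype.card V)
    (hdeg : ∀ v : V, ((closedNbhd G {v}).ncard : ℝ) ≤
      (1 / (4 * ((t : ℝ) - 1))) * Real.sqrt (Fintype.card V)) :
    ∃ X : Set V, ∀ C : Set V, IsCompOfDel G X C →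
      (C.ncard : ℝ) ≤ (Fintype.card V : ℝ) - Real.sqrt (Fintype.card V) ∧
      (X.ncard : ℝ) ≤ (Fintype.card V : ℝ) ^ (-(1 / 2 : ℝ)) *
        ((Fintype.card V : ℝ) - (C.ncard : ℝ)) := by
  by_contra hno
  have hs2 : Real.sqrt (Fintype.card V) * Real.sqrt (Fintype.card V) = Fintype.card V :=
    Real.mul_self_sqrt (Nat.cast_nonneg _)
  have hn' : (16 : ℝ) ≤ Fintype.card V := by exact_mod_cast hn
  have hs4 : 4 ≤ Real.sqrt (Fintype.card V) := by
    apply Real.le_sqrt_of_sq_le; linarith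
  have hpow : (Fintype.card V : ℝ) ^ (-(1 / 2 : ℝ)) = (Real.sqrt (Fintype.card V))⁻¹ := by
    rw [Real.rpow_neg (Nat.cast_nonneg _), Real.sqrt_eq_rpow]
  have ht' : (2 : ℝ) ≤ t := by exact_mod_cast ht
  rw [hpow] at hno
  set n : ℝ := (Fintype.card V : ℝ) with hnd
  set s := Real.sqrt n with hs
  have hbig : ∀ (p : ℕ → V) (k : ℕ), k + 1 ≤ t → ∃ C,
      IsCompOfDel G (closedNbhd G {v | ∃ i < k, v = p i}) C ∧
      Fintype.card V < 2 * C.ncard := by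
    intro p k hk
    by_contra! hcon
    apply hno
    refine ⟨closedNbhd G {v | ∃ i < k, v = p i}, fun C hC => ?_⟩
    have h1 := hcon C hC
    have h2 : 2 * (C.ncard : ℝ) ≤ n := by rw [hnd]; exact_mod_cast h1
    have h3 := nb_card G _ hdeg p k
    have hk' : (k : ℝ) ≤ t - 1 := by
      have : ((k + 1 : ℕ) : ℝ) ≤ t := by exact_mod_cast hk
      push_cast at this; linarith
    have h4 : (k : ℝ) * (1 / (4 * ((t : ℝ) - 1)) * s) ≤ s / 4 := by
      have hpos : (0 : ℝ) < t - 1 := by linarith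
      calc (k : ℝ) * (1 / (4 * ((t : ℝ) - 1)) * s)
          ≤ (t - 1) * (1 / (4 * ((t : ℝ) - 1)) * s) := by
            apply mul_le_mul_of_nonneg_right hk'; positivity
        _ = s / 4 := by field_simp
    constructor
    · nlinarith
    · refine (h3.trans h4).trans ?_
      rw [inv_mul_eq_div, le_div_iff₀ (by linarith)]
      nlinarith
  obtain ⟨p, C, hinj, hadj, -⟩ := build t G hconn hbig (t - 1) (by omega)
  refine hfree (fun i => p i) ⟨?_, ?_⟩
  · intro i j h
    exact Fin.ext (hinj i (by omega) j (by omega) h)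
  · intro i j
    exact hadj i (by omega) j (by omega)

end Paper
end
end

section
/- Let t ≥ 4 be an integer and let G be a connected C_{≥t}-free graph on n ≥ 16 vertices such that |N[v]| ≤ (1/(4(t−1))) · √n for every vertex v of G. Then there exists a set X ⊆ V(G) such that every connected component C of G − X satisfanswer|V(C)| ≤ n − √n, and moreover |X| ≤ n^{−1/2} · (n − |V(C)|) for every connected component C of G − X. -/
noncomputable section

namespace Paper

/-- `p : Fin k → V` is an induced cycle in `G` (on `k` vertices). -/
def IsInducedCycle {V : Type} (G : SimpleGraph V) {k : ℕ} (p : Fin k → V) : Prop :=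
  Function.Injective p ∧
    ∀ i j : Fin k, G.Adj (p i) (p j) ↔
      (((i : ℕ) + 1) % k = (j : ℕ) ∨ ((j : ℕ) + 1) % k = (i : ℕ))

/-- `G` is `C_{≥t}`-free: it contains no induced cycle on at least `t` vertices. -/
def CgeFree {V : Type} (G : SimpleGraph V) (t : ℕ) : Prop :=
  ∀ k, t ≤ k → ∀ p : Fin k → V, ¬ IsInducedCycle G p

/-- connectedness of a set of vertices -/
def Conn {V : Type} (G : SimpleGraph V) (D : Set V) : Prop :=
  ∀ S : Set V, (∃ x ∈ D, x ∈ S) → (∀ x ∈ D, x ∈ S → ∀ y ∈ D, G.Adj x y → y ∈ S) → D ⊆ S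

/-- big component of the complement of the closed neighbourhood of `a 0, ..., a (k-1)` -/
structure BigC {V : Type} (G : SimpleGraph V) (n k : ℕ) (a : ℕ → V) (C : Set V) : Prop where
  conn : Conn G C
  out : ∀ x ∈ C, ∀ i < k, x ≠ a i ∧ ¬ G.Adj (a i) x
  closed : ∀ x ∈ C, ∀ y, y ∉ C → G.Adj x y → ∃ i < k, y = a i ∨ G.Adj (a i) y
  big : n < 2 * C.ncard

structure St {V : Type} (G : SimpleGraph V) (n k : ℕ) (a : ℕ → V) (C : Set V) (w : V) : Prop where
  bc : BigC G n k a C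
  kpos : 1 ≤ k
  inj : ∀ i < k, ∀ j < k, a i = a j → i = j
  adj : ∀ i < k, ∀ j < k, (G.Adj (a i) (a j) ↔ (i + 1 = j ∨ j + 1 = i))
  wC : w ∉ C
  wadjC : ∃ x ∈ C, G.Adj x w
  wadj : G.Adj (a (k-1)) w
  wnadj : ∀ i, i + 1 < k → ¬ G.Adj (a i) w

theorem glue {V : Type} (G : SimpleGraph V) (t s m : ℕ) (hs : 1 ≤ s) (hm : 2 ≤ m) (hst : t ≤ s + m)
    (hfree : CgeFree G t) (a b : ℕ → V)
    (ainj : ∀ i < s, ∀ j < s, a i = a j → i = j)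
    (aadj : ∀ i < s, ∀ j < s, (G.Adj (a i) (a j) ↔ (i + 1 = j ∨ j + 1 = i)))
    (binj : ∀ i < m, ∀ j < m, b i = b j → i = j)
    (badj : ∀ i < m, ∀ j < m, (G.Adj (b i) (b j) ↔ (i + 1 = j ∨ j + 1 = i)))
    (hne : ∀ i < s, ∀ j < m, a i ≠ b j)
    (hab : ∀ i < s, ∀ j < m, (G.Adj (a i) (b j) ↔ ((i + 1 = s ∧ j = 0) ∨ (i = 0 ∧ j + 1 = m)))) :
    False := by
  have hmod : ∀ i < s + m, (i + 1) % (s + m) = if i + 1 = s + m then 0 else i + 1 := by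
    intro i hi
    split_ifs with h
    · rw [h, Nat.mod_self]
    · exact Nat.mod_eq_of_lt (by omega)
  refine hfree (s + m) hst (fun i => if (i : ℕ) < s then a i else b (i - s)) ⟨?_, ?_⟩
  · rintro ⟨i, hi⟩ ⟨j, hj⟩ h
    simp only at h
    simp only [Fin.mk.injEq]
    split_ifs at h with h1 h2 h2
    · exact ainj _ h1 _ h2 h
    · exact absurd h (hne _ h1 _ (by omega))
    · exact absurd h.symm (hne _ h2 _ (by omega))
    · have := binj _ (by omega) _ (by omega) h
      omega
  · rintro ⟨i, hi⟩ ⟨j, hj⟩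
    simp only [hmod i hi, hmod j hj]
    by_cases h1 : i < s <;> by_cases h2 : j < s
    · rw [if_pos h1, if_pos h2, aadj _ h1 _ h2]; split_ifs <;> omega
    · rw [if_pos h1, if_neg h2, hab _ h1 _ (by omega)]; split_ifs <;> omega
    · rw [if_neg h1, if_pos h2, G.adj_comm, hab _ h2 _ (by omega)]; split_ifs <;> omega
    · rw [if_neg h1, if_neg h2, badj _ (by omega) _ (by omega)]; split_ifs <;> omega

theorem shortest {V : Type} (G : SimpleGraph V) (C : Set V) (hC : Conn G C) (w u : V) (hwu : w ≠ u)
    (hw : ∃ x ∈ C, G.Adj x w) (hu : ∃ x ∈ C, G.Adj x u) :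
    ∃ (m : ℕ) (b : ℕ → V), 2 ≤ m ∧ b 0 = w ∧ b (m - 1) = u ∧
      (∀ i < m, ∀ j < m, b i = b j → i = j) ∧
      (∀ i < m, ∀ j < m, (G.Adj (b i) (b j) ↔ (i + 1 = j ∨ j + 1 = i))) ∧
      (∀ i, 0 < i → i + 1 < m → b i ∈ C) := by
  classical
  let D : Set V := {x | x ∈ C ∨ x = w ∨ x = u}
  let H : SimpleGraph V :=
    { Adj := fun x y => G.Adj x y ∧ x ∈ D ∧ y ∈ D
      symm := ⟨fun x y h => ⟨h.1.symm, h.2.2, h.2.1⟩⟩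
      loopless := ⟨fun x h => G.loopless.irrefl x h.1⟩ }
  obtain ⟨x0, hx0, hxw⟩ := hw
  obtain ⟨y0, hy0, hyu⟩ := hu
  have hH : ∀ x y, H.Adj x y ↔ G.Adj x y ∧ x ∈ D ∧ y ∈ D := fun x y => Iff.rfl
  have hreach : H.Reachable w u := by
    have h1 : C ⊆ {x | H.Reachable w x} := by
      apply hC
      · refine ⟨x0, hx0, ?_⟩
        exact SimpleGraph.Adj.reachable ((hH _ _).2 ⟨hxw.symm, Or.inr (Or.inl rfl), Or.inl hx0⟩)
      · intro x hx hxr y hy hxy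
        exact SimpleGraph.Reachable.trans hxr
          (SimpleGraph.Adj.reachable ((hH _ _).2 ⟨hxy, Or.inl hx, Or.inl hy⟩))
    exact (h1 hy0).trans
      (SimpleGraph.Adj.reachable ((hH _ _).2 ⟨hyu, Or.inl hy0, Or.inr (Or.inr rfl)⟩))
  obtain ⟨p, hp⟩ := hreach.exists_walk_length_eq_dist
  have hpos : 0 < p.length := by
    rcases Nat.eq_zero_or_pos p.length with h | h
    · exact absurd (SimpleGraph.Walk.eq_of_length_eq_zero h) hwu
    · exact h
  have hd : ∀ i ≤ p.length, H.dist w (p.getVert i) = i := by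
    intro i hi
    have h1 : H.dist w (p.getVert i) ≤ i := by
      refine (SimpleGraph.dist_le (p.take i)).trans ?_
      simp
    have h2 : H.dist (p.getVert i) u ≤ p.length - i := by
      refine (SimpleGraph.dist_le (p.drop i)).trans ?_
      simp
    have hr : H.Reachable w (p.getVert i) := (p.take i).reachable
    have h3 : H.dist w u ≤ H.dist w (p.getVert i) + H.dist (p.getVert i) u :=
      hr.dist_triangle_left u
    omega
  have hinj : ∀ i < p.length + 1, ∀ j < p.length + 1, p.getVert i = p.getVert j → i = j := by
    intro i hi j hj h
    rw [← hd i (by omega), h, hd j (by omega)]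
  have hsucc : ∀ i < p.length, H.Adj (p.getVert i) (p.getVert (i+1)) :=
    fun i hi => p.adj_getVert_succ hi
  have hD : ∀ i < p.length + 1, p.getVert i ∈ D := by
    intro i hi
    rcases Nat.lt_or_ge i p.length with h | h
    · exact (hsucc i h).2.1
    · rw [p.getVert_of_length_le h]; exact Or.inr (Or.inr rfl)
  refine ⟨p.length + 1, p.getVert, by omega, by simp, by simp, hinj, ?_, ?_⟩
  · intro i hi j hj
    constructor
    · intro h
      have h' : H.Adj (p.getVert i) (p.getVert j) := (hH _ _).2 ⟨h, hD i hi, hD j hj⟩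
      have key : ∀ i < p.length + 1, ∀ j < p.length + 1, H.Adj (p.getVert i) (p.getVert j) →
          j ≤ i + 1 := by
        intro i hi j hj h
        have h1 : H.dist w (p.getVert j) ≤ H.dist w (p.getVert i) + H.dist (p.getVert i) (p.getVert j) :=
          SimpleGraph.Reachable.dist_triangle_left (p.take i).reachable _
        rw [hd i (by omega), hd j (by omega), SimpleGraph.dist_eq_one_iff_adj.2 h] at h1
        exact h1
      have e1 := key i hi j hj h'
      have e2 := key j hj i hi h'.symm
      have : i ≠ j := by rintro rfl; exact G.loopless.irrefl _ h
      omega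
    · rintro (rfl | rfl)
      · exact (hsucc i (by omega)).1
      · exact (hsucc j (by omega)).1.symm
  · intro i h0 h1
    rcases hD i (by omega) with h | h | h
    · exact h
    · have := hinj i (by omega) 0 (by omega) (by simpa using h)
      omega
    · have := hinj i (by omega) p.length (by omega) (by simpa using h)
      omega

theorem drop_first {V : Type} (G : SimpleGraph V) (t n : ℕ) (ht : 4 ≤ t) (hfree : CgeFree G t)
    (a : ℕ → V) (C : Set V) (w : V) (h : St G n (t - 2) a C w) :
    St G n (t - 3) (fun i => a (i + 1)) C w := by
  refine ⟨⟨h.bc.conn, ?_, ?_, h.bc.big⟩, by omega, ?_, ?_, h.wC, h.wadjC, ?_, ?_⟩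
  · intro x hx i hi
    exact h.bc.out x hx (i+1) (by omega)
  · intro x hx u hu hxu
    by_contra hcon
    push Not at hcon
    have hcon' : ∀ i, 0 < i → i < t - 2 → u ≠ a i ∧ ¬ G.Adj (a i) u := by
      intro i h0 hi
      obtain ⟨j, rfl⟩ : ∃ j, i = j + 1 := ⟨i - 1, by omega⟩
      exact hcon j (by omega)
    have hav : ∀ y ∈ C, ∀ z, G.Adj y z → ∀ i < t - 2, a i ≠ z := by
      intro y hy z hyz i hi hh
      subst hh
      exact (h.bc.out y hy i hi).2 hyz.symm
    have hu0 : G.Adj (a 0) u := by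
      obtain ⟨i, hi, hh⟩ := h.bc.closed x hx u hu hxu
      rcases Nat.eq_zero_or_pos i with rfl | h0
      · rcases hh with hh | hh
        · exact absurd hh.symm (hav x hx u hxu 0 hi)
        · exact hh
      · rcases hh with hh | hh
        · exact absurd hh (hcon' i h0 hi).1
        · exact absurd hh (hcon' i h0 hi).2
    have hwu : w ≠ u := by
      rintro rfl
      exact (hcon' (t - 2 - 1) (by omega) (by omega)).2 h.wadj
    obtain ⟨m, b, hm, hb0, hbm, binj, badj, bC⟩ :=
      shortest G C h.bc.conn w u hwu h.wadjC ⟨x, hx, hxu⟩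
    obtain ⟨y, hy, hyw⟩ := h.wadjC
    have hcases : ∀ j < m, j = 0 ∨ j = m - 1 ∨ (j ≠ 0 ∧ j + 1 ≠ m ∧ b j ∈ C) := by
      intro j hj
      by_cases h1 : j = 0
      · exact Or.inl h1
      by_cases h2 : j = m - 1
      · exact Or.inr (Or.inl h2)
      exact Or.inr (Or.inr ⟨h1, by omega, bC j (by omega) (by omega)⟩)
    refine glue G t (t - 2) m (by omega) hm (by omega) hfree a b h.inj h.adj binj badj ?_ ?_
    · intro i hi j hj
      rcases hcases j hj with rfl | rfl | ⟨-, -, hc⟩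
      · rw [hb0]; exact hav y hy w hyw i hi
      · rw [hbm]; exact hav x hx u hxu i hi
      · exact fun e => (h.bc.out _ hc i hi).1 e.symm
    · intro i hi j hj
      rcases hcases j hj with rfl | rfl | ⟨h1, h2, hc⟩
      · rw [hb0]
        by_cases e : i + 1 = t - 2
        · have e' : i = t - 2 - 1 := by omega
          have := h.wadj
          rw [← e'] at this
          simp [this, e]
        · have := h.wnadj i (by omega)
          simp only [this, false_iff]
          omega
      · rw [hbm]
        rcases Nat.eq_zero_or_pos i with rfl | h0
        · exact iff_of_true hu0 (Or.inr ⟨rfl, by omega⟩)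
        · simp only [(hcon' i h0 hi).2, false_iff]; omega
      · simp only [(h.bc.out _ hc i hi).2, false_iff]; omega
  · intro i hi j hj e
    have := h.inj (i+1) (by omega) (j+1) (by omega) e
    omega
  · intro i hi j hj
    rw [h.adj (i+1) (by omega) (j+1) (by omega)]
    omega
  · have := h.wadj
    have e : t - 3 - 1 + 1 = t - 2 - 1 := by omega
    simpa only [e] using this
  · intro i hi
    exact h.wnadj (i+1) (by omega)

theorem big_inter {V : Type} [Fintype V] (C C' : Set V) (h : Fintype.card V < 2 * C.ncard)
    (h' : Fintype.card V < 2 * C'.ncard) : ∃ x, x ∈ C ∧ x ∈ C' := by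
  by_contra hcon
  push Not at hcon
  have hd : Disjoint C C' := Set.disjoint_left.2 hcon
  have h1 := Set.ncard_union_eq hd (Set.toFinite _) (Set.toFinite _)
  have h2 : (C ∪ C').ncard ≤ Fintype.card V := by
    rw [← Nat.card_eq_fintype_card, ← Set.ncard_univ]
    exact Set.ncard_le_ncard (Set.subset_univ _) (Set.toFinite _)
  omega

theorem extend {V : Type} [Fintype V] (G : SimpleGraph V) (k : ℕ)
    (hbig : ∀ a : ℕ → V, ∃ C, BigC G (Fintype.card V) (k + 1) a C)
    (a : ℕ → V) (C : Set V) (w : V) (h : St G (Fintype.card V) k a C w) :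
    ∃ a' C' w', St G (Fintype.card V) (k + 1) a' C' w' ∧ C'.ncard < C.ncard := by
  let a' : ℕ → V := fun i => if i < k then a i else w
  have ha : ∀ i < k, a' i = a i := fun i hi => if_pos hi
  have hk : a' k = w := if_neg (lt_irrefl k)
  obtain ⟨C', hC'⟩ := hbig a'
  have hsub : C' ⊆ C := by
    apply hC'.conn
    · obtain ⟨x, h1, h2⟩ := big_inter C C' h.bc.big hC'.big
      exact ⟨x, h2, h1⟩
    · intro x hx hxC y hy hxy
      by_contra hyC
      obtain ⟨i, hi, hh⟩ := h.bc.closed x hxC y hyC hxy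
      have := hC'.out y hy i (by omega)
      rw [ha i hi] at this
      tauto
  obtain ⟨z, hz, hzw⟩ := h.wadjC
  have hz' : z ∉ C' := by
    intro hz'
    have := (hC'.out z hz' k (by omega)).2
    rw [hk] at this
    exact this hzw.symm
  have hy : ∃ y ∈ C, y ∉ C' ∧ ∃ x ∈ C', G.Adj x y := by
    by_contra hcon
    push Not at hcon
    apply hz'
    refine h.bc.conn C' ?_ ?_ hz
    · obtain ⟨x, h1, h2⟩ := big_inter C C' h.bc.big hC'.big
      exact ⟨x, h1, h2⟩
    · intro x _ hx' y hy hxy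
      by_contra hy'
      exact hcon y hy hy' x hx' hxy
  obtain ⟨y, hyC, hyC', x, hx, hxy⟩ := hy
  have hyw : G.Adj w y := by
    obtain ⟨i, hi, hh⟩ := hC'.closed x hx y hyC' hxy
    rcases Nat.lt_or_ge i k with hik | hik
    · have := h.bc.out y hyC i hik
      rw [ha i hik] at hh
      tauto
    · have e : i = k := by omega
      subst e
      rw [hk] at hh
      rcases hh with hh | hh
      · subst hh; exact absurd hyC h.wC
      · exact hh
  have hwne : ∀ i < k, a i ≠ w := by
    intro i hi e
    have := (h.bc.out z hz i hi).2
    rw [e] at this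
    exact this hzw.symm
  have hwa : ∀ i < k, (G.Adj (a i) w ↔ i + 1 = k) := by
    intro i hi
    by_cases e : i + 1 = k
    · have := h.wadj
      have e' : k - 1 = i := by omega
      rw [e'] at this
      simp [this, e]
    · simp [h.wnadj i (by omega), e]
  have hlt : ∀ i < k + 1, i < k ∨ i = k := by intro i hi; omega
  refine ⟨a', C', y, ⟨hC', by omega, ?_, ?_, hyC', ⟨x, hx, hxy⟩, ?_, ?_⟩, ?_⟩
  · intro i hi j hj e
    rcases hlt i hi with h1 | rfl <;> rcases hlt j hj with h2 | rfl
    · rw [ha i h1, ha j h2] at e; exact h.inj i h1 j h2 e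
    · rw [ha i h1, hk] at e; exact absurd e (hwne i h1)
    · rw [ha j h2, hk] at e; exact absurd e.symm (hwne j h2)
    · rfl
  · intro i hi j hj
    rcases hlt i hi with h1 | rfl <;> rcases hlt j hj with h2 | rfl
    · rw [ha i h1, ha j h2]; exact h.adj i h1 j h2
    · rw [ha i h1, hk, hwa i h1]; omega
    · rw [ha j h2, hk, G.adj_comm, hwa j h2]; omega
    · simp
  · simpa [hk] using hyw
  · intro i hi
    rw [ha i (by omega)]
    exact (h.bc.out y hyC i (by omega)).2
  · exact Set.ncard_lt_ncard ⟨hsub, fun hh => hz' (hh hz)⟩ (Set.toFinite _)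

theorem no_state {V : Type} [Fintype V] (G : SimpleGraph V) (t : ℕ) (ht : 4 ≤ t)
    (hfree : CgeFree G t)
    (hbig : ∀ k ≤ t - 2, ∀ a : ℕ → V, ∃ C, BigC G (Fintype.card V) k a C) :
    ∀ N k a C w, k ≤ t - 2 → Set.ncard C ≤ N → ¬ St G (Fintype.card V) k a C w := by
  intro N
  induction N with
  | zero =>
    intro k a C w hk hC h
    have := h.bc.big
    omega
  | succ N ih =>
    intro k a C w hk hC h
    obtain ⟨k', a1, hk', h1⟩ : ∃ k' a1, k' + 1 ≤ t - 2 ∧ St G (Fintype.card V) k' a1 C w := by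
      rcases Nat.lt_or_ge k (t - 2) with hlt | hge
      · exact ⟨k, a, by omega, h⟩
      · have e : k = t - 2 := by omega
        subst e
        exact ⟨t - 3, _, by omega, drop_first G t _ ht hfree a C w h⟩
    obtain ⟨a2, C2, w2, h2, hlt⟩ := extend G k' (hbig (k' + 1) hk') a1 C w h1
    exact ih (k' + 1) a2 C2 w2 hk' (by omega) h2

theorem conn_univ {V : Type} (G : SimpleGraph V) (hconn : G.Connected) : Conn G Set.univ := by
  intro S ⟨x, _, hx⟩ hS y _
  obtain ⟨p⟩ := hconn.preconnected x y
  induction p with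
  | nil => exact hx
  | cons hadj p ih => exact ih trivial (hS _ trivial hx _ trivial hadj) trivial

theorem bigC_of_comp {V : Type} (G : SimpleGraph V) (n k : ℕ) (a : ℕ → V) (C : Set V)
    (h : IsCompOfDel G (closedNbhd G (a '' {i | i < k})) C) (hb : n < 2 * C.ncard) :
    BigC G n k a C := by
  generalize hX : closedNbhd G (a '' {i | i < k}) = X at h
  have hmem : ∀ y, y ∈ X ↔ ∃ i < k, y = a i ∨ G.Adj (a i) y := by
    intro y
    rw [← hX]
    simp only [closedNbhd, Set.mem_ofPred_eq, Set.mem_image]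
    constructor
    · rintro (⟨i, hi, rfl⟩ | ⟨_, ⟨i, hi, rfl⟩, h⟩)
      · exact ⟨i, hi, Or.inl rfl⟩
      · exact ⟨i, hi, Or.inr h⟩
    · rintro ⟨i, hi, rfl | h⟩
      · exact Or.inl ⟨i, hi, rfl⟩
      · exact Or.inr ⟨_, ⟨i, hi, rfl⟩, h⟩
  obtain ⟨v, rfl⟩ := h
  refine ⟨?_, ?_, ?_, hb⟩
  · rintro S ⟨_, ⟨x, hx, rfl⟩, hxS⟩ hS _ ⟨y, hy, rfl⟩
    obtain ⟨p⟩ := SimpleGraph.Reachable.trans hx (SimpleGraph.Reachable.symm hy)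
    clear hb
    induction p with
    | nil => exact hxS
    | @cons x z y hadj p ih =>
      have hz : z ∈ {u : ↥(Xᶜ) | (G.induce Xᶜ).Reachable u v} :=
        SimpleGraph.Reachable.trans (SimpleGraph.Adj.reachable hadj.symm) hx
      exact ih hz (hS _ ⟨_, hx, rfl⟩ hxS _ ⟨_, hz, rfl⟩ hadj) hy
  · rintro _ ⟨x, hx, rfl⟩ i hi
    have := x.2
    rw [Set.mem_compl_iff, hmem] at this
    push Not at this
    exact this i hi
  · rintro _ ⟨x, hx, rfl⟩ y hy hxy
    rw [← hmem]
    by_contra hyX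
    apply hy
    refine ⟨⟨y, hyX⟩, ?_, rfl⟩
    refine SimpleGraph.Reachable.trans (SimpleGraph.Adj.reachable ?_) hx
    exact hxy.symm

theorem exists_sep {V : Type} [Fintype V] (G : SimpleGraph V) (t : ℕ) (ht : 4 ≤ t)
    (hconn : G.Connected) (hfree : CgeFree G t) :
    ∃ k ≤ t - 2, ∃ a : ℕ → V, ∀ C, IsCompOfDel G (closedNbhd G (a '' {i | i < k})) C →
      2 * C.ncard ≤ Fintype.card V := by
  by_contra hcon
  push Not at hcon
  have hbig : ∀ k ≤ t - 2, ∀ a : ℕ → V, ∃ C, BigC G (Fintype.card V) k a C := by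
    intro k hk a
    obtain ⟨C, h1, h2⟩ := hcon k hk a
    exact ⟨C, bigC_of_comp G _ k a C h1 h2⟩
  obtain ⟨v⟩ := hconn.nonempty
  obtain ⟨C, hC⟩ := hbig 1 (by omega) (fun _ => v)
  have hvC : v ∉ C := fun hv => (hC.out v hv 0 (by omega)).1 rfl
  have hne : ∃ x, x ∈ C := by
    obtain ⟨x, hx, _⟩ := big_inter C C hC.big hC.big
    exact ⟨x, hx⟩
  have hy : ∃ x ∈ C, ∃ y, y ∉ C ∧ G.Adj x y := by
    by_contra hc
    push Not at hc
    apply hvC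
    refine conn_univ G hconn C ?_ ?_ (Set.mem_univ v)
    · obtain ⟨x, hx⟩ := hne
      exact ⟨x, trivial, hx⟩
    · intro x _ hx y _ hxy
      by_contra hyC
      exact hc x hx y hyC hxy
  obtain ⟨x, hx, y, hyC, hxy⟩ := hy
  have hvy : G.Adj v y := by
    obtain ⟨i, hi, rfl | hh⟩ := hC.closed x hx y hyC hxy
    · exact absurd hxy.symm (hC.out x hx 0 (by omega)).2
    · exact hh
  refine no_state G t ht hfree hbig _ 1 (fun _ => v) C y (by omega) le_rfl
    ⟨hC, le_rfl, ?_, ?_, hyC, ⟨x, hx, hxy⟩, hvy, ?_⟩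
  · intro i hi j hj _; omega
  · intro i hi j hj; simp; omega
  · intro i hi; omega

theorem card_nbhd {V : Type} [Fintype V] (G : SimpleGraph V) (B : ℝ)
    (hB : ∀ v : V, ((closedNbhd G {v}).ncard : ℝ) ≤ B) (a : ℕ → V) (k : ℕ) :
    ((closedNbhd G (a '' {i | i < k})).ncard : ℝ) ≤ k * B := by
  induction k with
  | zero => simp [closedNbhd]
  | succ k ih =>
    have hsub : closedNbhd G (a '' {i | i < k + 1}) ⊆
        closedNbhd G (a '' {i | i < k}) ∪ closedNbhd G {a k} := by
      rintro y (⟨i, hi, rfl⟩ | ⟨_, ⟨i, hi, rfl⟩, h⟩)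
      · rcases Nat.lt_or_ge i k with h | h
        · exact Or.inl (Or.inl ⟨i, h, rfl⟩)
        · have e : i = k := by simp at hi; omega
          subst e
          exact Or.inr (Or.inl rfl)
      · rcases Nat.lt_or_ge i k with h' | h'
        · exact Or.inl (Or.inr ⟨_, ⟨i, h', rfl⟩, h⟩)
        · have e : i = k := by simp at hi; omega
          subst e
          exact Or.inr (Or.inr ⟨_, rfl, h⟩)
    have h1 := (Set.ncard_le_ncard hsub (Set.toFinite _)).trans (Set.ncard_union_le _ _)
    have h2 : ((closedNbhd G (a '' {i | i < k + 1})).ncard : ℝ) ≤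
      (closedNbhd G (a '' {i | i < k})).ncard + (closedNbhd G {a k}).ncard := by exact_mod_cast h1
    have := hB (a k)
    push_cast
    linarith

/-- if `G` is a connected `C_{≥t}`-free graph on `n ≥ 16` vertices with
`|N[v]| ≤ (1/(4(t-1)))·√n` for every vertex `v`, then there is a set `X` of vertices
such that every connected component `C` of `G - X` satisfies `|C| ≤ n - √n` and
`|X| ≤ n^{-1/2}·(n - |C|)`. -/
theorem stmt5 {V : Type} [Fintype V] (t : ℕ) (ht : 4 ≤ t) (G : SimpleGraph V)
    (hconn : G.Connected) (hfree : CgeFree G t) (hn : 16 ≤ Fintype.card V)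
    (hdeg : ∀ v : V, ((closedNbhd G {v}).ncard : ℝ) ≤
      (1 / (4 * ((t : ℝ) - 1))) * Real.sqrt (Fintype.card V)) :
    ∃ X : Set V, ∀ C : Set V, IsCompOfDel G X C →
      (C.ncard : ℝ) ≤ (Fintype.card V : ℝ) - Real.sqrt (Fintype.card V) ∧
      (X.ncard : ℝ) ≤ (Fintype.card V : ℝ) ^ (-(1 / 2 : ℝ)) *
        ((Fintype.card V : ℝ) - (C.ncard : ℝ)) := by
  obtain ⟨k, hk, a, hsep⟩ := exists_sep G t ht hconn hfree
  refine ⟨closedNbhd G (a '' {i | i < k}), fun C hC => ?_⟩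
  have hCc := hsep C hC
  have hX := card_nbhd G _ hdeg a k
  set n : ℝ := (Fintype.card V : ℝ) with hndef
  have hn' : (16 : ℝ) ≤ n := by rw [hndef]; exact_mod_cast hn
  have hC' : 2 * (C.ncard : ℝ) ≤ n := by rw [hndef]; exact_mod_cast hCc
  have hsq : Real.sqrt n * Real.sqrt n = n := Real.mul_self_sqrt (by linarith)
  have hs4 : 4 ≤ Real.sqrt n := Real.le_sqrt_of_sq_le (by linarith)
  have hk' : (k : ℝ) ≤ (t : ℝ) - 1 := by
    have : k + 1 ≤ t := by omega
    have : ((k + 1 : ℕ) : ℝ) ≤ t := by exact_mod_cast this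
    push_cast at this
    linarith
  have ht' : (4 : ℝ) ≤ t := by exact_mod_cast ht
  have hX' : (k : ℝ) * (1 / (4 * ((t : ℝ) - 1)) * Real.sqrt n) ≤ Real.sqrt n / 4 := by
    have hp : 0 < (t : ℝ) - 1 := by linarith
    calc (k : ℝ) * (1 / (4 * ((t : ℝ) - 1)) * Real.sqrt n)
        ≤ ((t : ℝ) - 1) * (1 / (4 * ((t : ℝ) - 1)) * Real.sqrt n) := by gcongr
      _ = Real.sqrt n / 4 := by field_simp
  refine ⟨by nlinarith, ?_⟩
  rw [Real.rpow_neg (by linarith), ← Real.sqrt_eq_rpow]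
  refine (hX.trans hX').trans ?_
  rw [inv_mul_eq_div, le_div_iff₀ (by linarith)]
  nlinarith

end Paper
end
end

section
/- For every integer t ≥ 4 there exists a constant c_t such that every C_{≥t}-free graph G has treewidth at most c_t · Δ(G), where Δ(G) is the maximum degree of G. -/
noncomputable section

namespace Paper

/-- `p` restricted to indices `< m` is an induced path. -/
def IP {V : Type} (G : SimpleGraph V) (p : ℕ → V) (m : ℕ) : Prop :=
  (∀ i j, i < m → j < m → p i = p j → i = j) ∧
    ∀ i j, i < m → j < m → (G.Adj (p i) (p j) ↔ (i + 1 = j ∨ j + 1 = i))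

/-- one step avoiding `U` -/
def Stp {V : Type} (G : SimpleGraph V) (U : Finset V) (a b : V) : Prop :=
  G.Adj a b ∧ a ∉ U ∧ b ∉ U

/-- reachability avoiding `U` -/
def Rch {V : Type} (G : SimpleGraph V) (U : Finset V) (a b : V) : Prop :=
  Relation.ReflTransGen (Stp G U) a b

lemma Rch.symm {V : Type} {G : SimpleGraph V} {U : Finset V} {a b : V} (h : Rch G U a b) :
    Rch G U b a := by
  induction h with
  | refl => exact Relation.ReflTransGen.refl
  | tail _ h ih => exact Relation.ReflTransGen.head ⟨h.1.symm, h.2.2, h.2.1⟩ ih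

lemma Rch.mono {V : Type} {G : SimpleGraph V} {U U' : Finset V} (hU : U ⊆ U') {a b : V}
    (h : Rch G U' a b) : Rch G U a b := by
  induction h with
  | refl => exact Relation.ReflTransGen.refl
  | tail _ h ih =>
    exact Relation.ReflTransGen.tail ih ⟨h.1, fun x => h.2.1 (hU x), fun x => h.2.2 (hU x)⟩

lemma Rch.notMem {V : Type} {G : SimpleGraph V} {U : Finset V} {a b : V} (h : Rch G U a b)
    (ha : a ∉ U) : b ∉ U := by
  induction h with
  | refl => exact ha
  | tail _ h ih => exact h.2.2

/-- walk from `y` to `x` of length `l` with interior in `C`. -/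
def Wk {V : Type} (G : SimpleGraph V) (C : Set V) (y x : V) (l : ℕ) (q : ℕ → V) : Prop :=
  q 0 = y ∧ q l = x ∧ (∀ i < l, G.Adj (q i) (q (i + 1))) ∧ ∀ i, 0 < i → i < l → q i ∈ C

lemma exists_Wk {V : Type} {G : SimpleGraph V} {U : Finset V} {v x y w1 w2 : V}
    (h1 : Rch G U v w1) (h2 : Rch G U v w2) (hy : G.Adj y w1) (hx : G.Adj w2 x) :
    ∃ l q, Wk G {w | Rch G U v w} y x l q := by
  have key : ∀ w, Rch G U w w2 → ∃ l, ∃ q : ℕ → V, q 0 = w ∧ q l = x ∧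
      (∀ i < l, G.Adj (q i) (q (i + 1))) ∧ ∀ i < l, Rch G U v (q i) := by
    intro w hw
    induction hw using Relation.ReflTransGen.head_induction_on with
    | refl =>
      refine ⟨1, fun i => if i = 0 then w2 else x, by simp, by simp, ?_, ?_⟩
      · intro i hi
        obtain rfl : i = 0 := by omega
        simpa using hx
      · intro i hi
        obtain rfl : i = 0 := by omega
        simpa using h2
    | @head a c hac hcw ih =>
      obtain ⟨l, q, q0, ql, qa, qC⟩ := ih
      refine ⟨l + 1, fun i => Nat.casesOn i a q, rfl, ql, ?_, ?_⟩
      · intro i hi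
        cases i with
        | zero => simpa [q0] using hac.1
        | succ i => simpa using qa i (by omega)
      · intro i hi
        cases i with
        | zero =>
          exact Relation.ReflTransGen.trans h2
            (Rch.symm (Relation.ReflTransGen.head hac hcw))
        | succ i => exact qC i (by omega)
  obtain ⟨l, q, q0, ql, qa, qC⟩ := key w1 (Relation.ReflTransGen.trans (Rch.symm h1) h2)
  refine ⟨l + 1, fun i => Nat.casesOn i y q, rfl, ql, ?_, ?_⟩
  · intro i hi
    cases i with
    | zero => simpa [q0] using hy
    | succ i => simpa using qa i (by omega)
  · intro i hi0 hi
    cases i with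
    | zero => omega
    | succ i => exact qC i (by omega)

lemma exists_ind_Wk {V : Type} {G : SimpleGraph V} {C : Set V} {x y : V}
    (h : ∃ l q, Wk G C y x l q) (hxy : y ≠ x) (hx : x ∉ C) :
    ∃ l q, Wk G C y x l q ∧ IP G q (l + 1) := by
  classical
  let l := Nat.find h
  obtain ⟨q, q0, ql, qa, qC⟩ : ∃ q, Wk G C y x l q := Nat.find_spec h
  have hmin : ∀ l' < l, ¬ ∃ q, Wk G C y x l' q := fun l' hl' => Nat.find_min h hl'
  have hsc : ∀ i j, i + 1 < j → j ≤ l → ¬ G.Adj (q i) (q j) := by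
    intro i j hij hj hadj
    apply hmin (l - (j - i - 1)) (by omega)
    refine ⟨fun a => if a ≤ i then q a else q (a + (j - i - 1)), by simpa using q0, ?_, ?_, ?_⟩
    · have e : l - (j - i - 1) + (j - i - 1) = l := by omega
      have : ¬ (l - (j - i - 1) ≤ i) := by omega
      simp only [this, if_false, e, ql]
    · intro a ha
      rcases lt_trichotomy a i with h | h | h
      · have h1 : a ≤ i := by omega
        have h2 : a + 1 ≤ i := by omega
        simpa [h1, h2] using qa a (by omega)
      · subst h
        have e : a + 1 + (j - a - 1) = j := by omega
        simpa [e] using hadj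
      · have h1 : ¬ a ≤ i := by omega
        have h2 : ¬ a + 1 ≤ i := by omega
        have e : a + 1 + (j - i - 1) = a + (j - i - 1) + 1 := by omega
        simp only [h1, h2, if_false, e]
        exact qa _ (by omega)
    · intro a ha0 ha
      by_cases h1 : a ≤ i
      · simp only [h1, if_true]; exact qC a ha0 (by omega)
      · simp only [h1, if_false]; exact qC _ (by omega) (by omega)
  have hne : ∀ i j, i < j → j ≤ l → q i ≠ q j := by
    intro i j hij hj he
    rcases Nat.lt_or_ge j l with h | h
    · exact hsc i (j + 1) (by omega) (by omega) (he ▸ qa j h)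
    · obtain rfl : j = l := by omega
      rcases Nat.eq_zero_or_pos i with h0 | h0
      · subst h0; exact hxy (by rw [← q0, ← ql, he])
      · exact hx (by rw [← ql, ← he]; exact qC i h0 hij)
  refine ⟨l, q, ⟨q0, ql, qa, qC⟩, ?_, ?_⟩
  · intro i j hi hj he
    rcases lt_trichotomy i j with h | h | h
    · exact absurd he (hne i j h (by omega))
    · exact h
    · exact absurd he.symm (hne j i h (by omega))
  · intro i j hi hj
    constructor
    · intro hadj
      by_contra hc
      rcases lt_trichotomy i j with h | h | h
      · exact hsc i j (by omega) (by omega) hadj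
      · subst h; exact G.irrefl hadj
      · exact hsc j i (by omega) (by omega) hadj.symm
    · rintro (rfl | rfl)
      · exact qa i (by omega)
      · exact (qa j (by omega)).symm

lemma cycle_of {V : Type} {G : SimpleGraph V} {p q : ℕ → V} {m l : ℕ} (hm : 2 ≤ m) (hl : 1 ≤ l)
    (hp : IP G p m) (hq : IP G q (l + 1))
    (hne : ∀ i < m, ∀ j ≤ l, p i ≠ q j)
    (hadj : ∀ i < m, ∀ j ≤ l, G.Adj (p i) (q j) ↔ (i + 1 = m ∧ j = 0) ∨ (i = 0 ∧ j = l)) :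
    IsInducedCycle G (fun i : Fin (m + l + 1) => if (i : ℕ) < m then p i else q (i - m)) := by
  have hmod : ∀ i < m + l + 1, (i + 1) % (m + l + 1) = if i = m + l then 0 else i + 1 := by
    intro i hi
    split_ifs with h
    · subst h; simp
    · exact Nat.mod_eq_of_lt (by omega)
  constructor
  · rintro ⟨i, hi⟩ ⟨j, hj⟩ he
    simp only at he
    rw [Fin.mk.injEq]
    split_ifs at he with h1 h2 h2
    · exact hp.1 i j h1 h2 he
    · exact absurd he (hne _ h1 _ (by omega))
    · exact absurd he.symm (hne _ h2 _ (by omega))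
    · have := hq.1 _ _ (by omega) (by omega) he
      omega
  · rintro ⟨i, hi⟩ ⟨j, hj⟩
    simp only [hmod i hi, hmod j hj]
    by_cases h1 : i < m <;> by_cases h2 : j < m
    · simp only [h1, h2, if_true]
      rw [hp.2 i j h1 h2]
      split_ifs <;> omega
    · simp only [h1, h2, if_true, if_false]
      rw [hadj i h1 _ (by omega)]
      split_ifs <;> omega
    · simp only [h1, h2, if_true, if_false]
      rw [G.adj_comm, hadj j h2 _ (by omega)]
      split_ifs <;> omega
    · simp only [h1, h2, if_false]
      rw [hq.2 _ _ (by omega) (by omega)]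
      split_ifs <;> omega

/-- goodness of an induced path for the component of `v` -/
def Good {V : Type} (G : SimpleGraph V) (U : Finset V) (v : V) (p : ℕ → V) (m : ℕ) : Prop :=
  IP G p m ∧ ∀ w, Rch G U v w → (∀ i < m, w ≠ p i ∧ ¬ G.Adj w (p i)) ∧
    ∀ s ∈ U, G.Adj w s → ∃ i < m, G.Adj s (p i)

/-- The extension step. -/
lemma extend_s6 {V : Type} {G : SimpleGraph V} {t : ℕ} (ht : 4 ≤ t) (hG : CgeFree G t)
    {U : Finset V} {v : V} (hv : v ∉ U) (h : ∃ m p, Good G U v p m) :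
    ∃ m p, Good G U v p m ∧
     ((m = 0) ∨ (m < t ∧ ∃ u ∈ U, (∃ w, Rch G U v w ∧ G.Adj w u) ∧
       IP G (Function.update p m u) (m + 1))) := by
  classical
  let m := Nat.find h
  obtain ⟨p, hp, hC⟩ : ∃ p, Good G U v p m := Nat.find_spec h
  have hmin : ∀ l' < m, ¬ ∃ q, Good G U v q l' := fun l' hl' => Nat.find_min h hl'
  refine ⟨m, p, ⟨hp, hC⟩, ?_⟩
  rcases Nat.eq_zero_or_pos m with h0 | hpos
  · exact Or.inl h0
  right
  -- a vertex attached only to the last one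
  have hlast : ∃ u ∈ U, (∃ w, Rch G U v w ∧ G.Adj w u) ∧
      ∀ i < m, G.Adj u (p i) ↔ i + 1 = m := by
    by_contra hcon
    push Not at hcon
    apply hmin (m - 1) (by omega)
    refine ⟨p, ⟨fun i j hi hj => hp.1 i j (by omega) (by omega),
      fun i j hi hj => hp.2 i j (by omega) (by omega)⟩, fun w hw =>
      ⟨fun i hi => (hC w hw).1 i (by omega), fun s hs hws => ?_⟩⟩
    by_contra hno
    push Not at hno
    obtain ⟨i, hi, hsi⟩ := (hC w hw).2 s hs hws
    obtain ⟨j, hj, hh⟩ := hcon s hs ⟨w, hw, hws⟩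
    have hi' : i + 1 = m := by
      by_contra hx
      exact hno i (by omega) hsi
    rcases hh with ⟨ha, hb⟩ | ⟨ha, hb⟩
    · exact hno j (by omega) ha
    · obtain rfl : i = j := by omega
      exact ha hsi
  have hfirst : ∃ u ∈ U, (∃ w, Rch G U v w ∧ G.Adj w u) ∧
      ∀ i < m, G.Adj u (p i) ↔ i = 0 := by
    by_contra hcon
    push Not at hcon
    apply hmin (m - 1) (by omega)
    refine ⟨fun i => p (i + 1), ⟨fun i j hi hj he => ?_,
      fun i j hi hj => ?_⟩, fun w hw =>
      ⟨fun i hi => (hC w hw).1 (i + 1) (by omega), fun s hs hws => ?_⟩⟩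
    · have := hp.1 _ _ (by omega) (by omega) he
      omega
    · rw [hp.2 _ _ (by omega) (by omega)]
      omega
    by_contra hno
    push Not at hno
    obtain ⟨i, hi, hsi⟩ := (hC w hw).2 s hs hws
    obtain ⟨j, hj, hh⟩ := hcon s hs ⟨w, hw, hws⟩
    have hno' : ∀ j, 0 < j → j < m → ¬ G.Adj s (p j) := by
      intro j hj0 hj
      have := hno (j - 1) (by omega)
      rwa [show j - 1 + 1 = j by omega] at this
    have hi' : i = 0 := by
      by_contra hx
      exact hno' i (by omega) hi hsi
    rcases hh with ⟨ha, hb⟩ | ⟨ha, hb⟩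
    · exact hno' j (by omega) hj ha
    · obtain rfl : i = j := by omega
      exact ha hsi
  obtain ⟨y, hyU, ⟨w1, hw1, hyw⟩, hy⟩ := hlast
  obtain ⟨x, hxU, ⟨w2, hw2, hxw⟩, hx⟩ := hfirst
  have hUp : ∀ u ∈ U, (∃ w, Rch G U v w ∧ G.Adj w u) → ∀ i < m, u ≠ p i := by
    rintro u hu ⟨w, hw, hwu⟩ i hi rfl
    exact ((hC w hw).1 i hi).2 hwu
  refine ⟨?_, y, hyU, ⟨w1, hw1, hyw⟩, ?_, ?_⟩
  · by_contra hmt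
    have hxy : y ≠ x := by
      rintro rfl
      have := (hy 0 hpos).1 ((hx 0 hpos).2 rfl)
      omega
    obtain ⟨l, q, ⟨q0, ql, qa, qC⟩, hq⟩ := exists_ind_Wk
      (exists_Wk hw1 hw2 hyw.symm hxw) hxy (fun hh => Rch.notMem hh hv hxU)
    have hl : 1 ≤ l := by
      by_contra hl
      obtain rfl : l = 0 := by omega
      exact hxy (q0.symm.trans ql)
    refine hG (m + l + 1) (by omega) _ (cycle_of (by omega) hl hp hq ?_ ?_)
    · intro i hi j hj he
      rcases Nat.eq_zero_or_pos j with h0 | h0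
      · subst h0
        exact hUp y hyU ⟨w1, hw1, hyw⟩ i hi (by rw [he, q0])
      · rcases Nat.lt_or_ge j l with h1 | h1
        · exact ((hC _ (qC j h0 h1)).1 i hi).1 he.symm
        · obtain rfl : j = l := by omega
          exact hUp x hxU ⟨w2, hw2, hxw⟩ i hi (by rw [he, ql])
    · intro i hi j hj
      rw [G.adj_comm]
      rcases Nat.eq_zero_or_pos j with h0 | h0
      · subst h0
        rw [q0, hy i hi]
        omega
      · rcases Nat.lt_or_ge j l with h1 | h1
        · have := ((hC _ (qC j h0 h1)).1 i hi).2
          simp only [this, false_iff]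
          omega
        · obtain rfl : j = l := by omega
          rw [ql, hx i hi]
          omega
  · have hne := hUp y hyU ⟨w1, hw1, hyw⟩
    intro i j hi hj he
    by_cases h1 : i = m <;> by_cases h2 : j = m
    · omega
    · subst h1
      rw [Function.update_self, Function.update_of_ne h2] at he
      exact absurd he (hne j (by omega))
    · subst h2
      rw [Function.update_self, Function.update_of_ne h1] at he
      exact absurd he.symm (hne i (by omega))
    · rw [Function.update_of_ne h1, Function.update_of_ne h2] at he
      exact hp.1 i j (by omega) (by omega) he
  · intro i j hi hj
    by_cases h1 : i = m <;> by_cases h2 : j = m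
    · rw [h1, h2]; simp
    · rw [h1, Function.update_self, Function.update_of_ne h2, hy j (by omega)]
      omega
    · rw [h2, Function.update_self, Function.update_of_ne h1, G.adj_comm, hy i (by omega)]
      omega
    · rw [Function.update_of_ne h1, Function.update_of_ne h2]
      exact hp.2 i j (by omega) (by omega)

/-- Partial decomposition of the vertices in `U`. -/
structure St_s6 {V : Type} (G : SimpleGraph V) (b : ℕ) (U : Finset V) (n : ℕ) (par : ℕ → ℕ)
    (B : ℕ → Finset V) : Prop where
  pos : 0 < n
  par_lt : ∀ i, 0 < i → i < n → par i < i
  sub : ∀ i < n, B i ⊆ U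
  root : ∀ v ∈ U, ∃ r < n, v ∈ B r ∧ ∀ i < n, v ∈ B i → i ≠ r → 0 < i ∧ v ∈ B (par i)
  edge : ∀ u ∈ U, ∀ v ∈ U, G.Adj u v → ∃ x < n, u ∈ B x ∧ v ∈ B x
  card : ∀ i < n, (B i).card ≤ b
  comp : ∀ v, v ∉ U → ∃ y < n, (∀ w, Rch G U v w → ∀ s ∈ U, G.Adj w s → s ∈ B y) ∧
    ∃ m p, Good G U v p m

/-- Adding one bag. -/
lemma St_s6.step {V : Type} [Fintype V] {G : SimpleGraph V} [DecidableRel G.Adj] {t : ℕ}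
    (ht : 4 ≤ t) (hG : CgeFree G t) {U : Finset V} {n : ℕ} {par : ℕ → ℕ} {B : ℕ → Finset V}
    (h : St_s6 G (t * G.maxDegree + 1) U n par B) {v : V} (hv : v ∉ U) :
    ∃ U' n' par' B', St_s6 G (t * G.maxDegree + 1) U' n' par' B' ∧ U ⊂ U' := by
  classical
  obtain ⟨y, hyn, hS, hgood⟩ := h.comp v hv
  obtain ⟨m, p, hp, hcase⟩ := extend_s6 ht hG hv hgood
  -- choose the new vertex
  obtain ⟨u, hIP, hmt, hdis, hnear⟩ : ∃ u, IP G (Function.update p m u) (m + 1) ∧ m < t ∧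
      ((m = 0 ∧ u = v) ∨ (0 < m ∧ u ∈ U)) ∧ (∃ w, Rch G U v w ∧ (w = u ∨ G.Adj w u)) := by
    rcases hcase with h0 | ⟨hm, u, huU, ⟨w, hw, hwu⟩, hIP⟩
    · subst h0
      refine ⟨v, ⟨fun i j hi hj _ => by omega, fun i j hi hj => ?_⟩, by omega, Or.inl ⟨rfl, rfl⟩,
        v, Relation.ReflTransGen.refl, Or.inl rfl⟩
      obtain rfl : i = 0 := by omega
      obtain rfl : j = 0 := by omega
      simp
    · refine ⟨u, hIP, hm, ?_, w, hw, Or.inr hwu⟩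
      right
      refine ⟨?_, huU⟩
      obtain ⟨i, hi, _⟩ := (hp.2 w hw).2 u huU hwu
      omega
  let S : Finset V := Finset.univ.filter (fun s => s ∈ U ∧ ∃ w, Rch G U v w ∧ G.Adj w s)
  let N : Finset V := Finset.univ.filter (fun w => Rch G U v w ∧ (w = u ∨ G.Adj w u))
  have hSm : ∀ s, s ∈ S ↔ s ∈ U ∧ ∃ w, Rch G U v w ∧ G.Adj w s := fun s => by simp [S]
  have hNm : ∀ s, s ∈ N ↔ Rch G U v s ∧ (s = u ∨ G.Adj s u) := fun s => by simp [N]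
  have hNU : ∀ s ∈ N, s ∉ U := fun s hs => Rch.notMem ((hNm s).1 hs).1 hv
  have hUU : U ⊆ U ∪ N := Finset.subset_union_left
  have hSy : ∀ s ∈ S, s ∈ B y := fun s hs => by
    obtain ⟨hsU, w, hw, hws⟩ := (hSm s).1 hs
    exact hS w hw s hsU hws
  have hpn : ∀ i < n, (if i = n then y else par i) = par i := fun i hi => by
    simp [hi.ne]
  have hclosed : ∀ a b, Rch G U v a → G.Adj a b → b ∉ U → Rch G U v b := fun a b ha hab hb =>
    Relation.ReflTransGen.tail ha ⟨hab, Rch.notMem ha hv, hb⟩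
  refine ⟨U ∪ N, n + 1, Function.update par n y, Function.update B n (S ∪ N), ?_, ?_⟩
  swap
  · refine Finset.ssubset_iff_subset_ne.2 ⟨hUU, fun he => ?_⟩
    obtain ⟨w, hw, hwu⟩ := hnear
    have hwN : w ∈ N := (hNm w).2 ⟨hw, hwu⟩
    exact hNU w hwN (he ▸ Finset.mem_union_right _ hwN)
  have hB : ∀ i < n, Function.update B n (S ∪ N) i = B i := fun i hi =>
    Function.update_of_ne hi.ne _ _
  have hP : ∀ i < n, Function.update par n y i = par i := fun i hi =>
    Function.update_of_ne hi.ne _ _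
  constructor
  · omega
  · intro i hi0 hi
    rcases Nat.lt_succ_iff_lt_or_eq.1 hi with h1 | h1
    · rw [hP i h1]; exact h.par_lt i hi0 h1
    · rw [h1, Function.update_self]; exact hyn
  · intro i hi
    rcases Nat.lt_succ_iff_lt_or_eq.1 hi with h1 | h1
    · rw [hB i h1]; exact (h.sub i h1).trans hUU
    · rw [h1, Function.update_self]
      exact Finset.union_subset_union (fun s hs => ((hSm s).1 hs).1) (fun _ h => h)
  · intro a ha
    by_cases haU : a ∈ U
    · obtain ⟨r, hr, har, hroot⟩ := h.root a haU
      refine ⟨r, by omega, by rwa [hB r hr], fun i hi hai hir => ?_⟩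
      rcases Nat.lt_succ_iff_lt_or_eq.1 hi with h1 | h1
      · rw [hB i h1] at hai
        obtain ⟨h0, hpar⟩ := hroot i h1 hai hir
        refine ⟨h0, ?_⟩
        rw [hP i h1, hB _ ((h.par_lt i h0 h1).trans h1)]
        exact hpar
      · subst h1
        rw [Function.update_self] at hai
        refine ⟨h.pos, ?_⟩
        rw [Function.update_self, hB y hyn]
        rcases Finset.mem_union.1 hai with h2 | h2
        · exact hSy a h2
        · exact absurd haU (hNU a h2)
    · refine ⟨n, by omega, ?_, fun i hi hai hir => ?_⟩
      · rw [Function.update_self]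
        rcases Finset.mem_union.1 ha with h2 | h2
        · exact absurd h2 haU
        · exact Finset.mem_union_right _ h2
      · have h1 : i < n := by omega
        rw [hB i h1] at hai
        exact absurd (h.sub i h1 hai) haU
  · have hnew : ∀ a ∈ N, ∀ b ∈ U ∪ N, G.Adj a b → b ∈ S ∪ N := by
      intro a ha b hb hab
      rcases Finset.mem_union.1 hb with h2 | h2
      · exact Finset.mem_union_left _ ((hSm b).2 ⟨h2, a, ((hNm a).1 ha).1, hab⟩)
      · exact Finset.mem_union_right _ h2
    intro a ha b hb hab
    by_cases haN : a ∈ N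
    · refine ⟨n, by omega, ?_, ?_⟩ <;> rw [Function.update_self]
      · exact Finset.mem_union_right _ haN
      · exact hnew a haN b hb hab
    by_cases hbN : b ∈ N
    · refine ⟨n, by omega, ?_, ?_⟩ <;> rw [Function.update_self]
      · exact hnew b hbN a ha hab.symm
      · exact Finset.mem_union_right _ hbN
    have haU : a ∈ U := (Finset.mem_union.1 ha).resolve_right haN
    have hbU : b ∈ U := (Finset.mem_union.1 hb).resolve_right hbN
    obtain ⟨x, hx, h1, h2⟩ := h.edge a haU b hbU hab
    exact ⟨x, by omega, by rwa [hB x hx], by rwa [hB x hx]⟩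
  · intro i hi
    rcases Nat.lt_succ_iff_lt_or_eq.1 hi with h1 | h1
    · rw [hB i h1]; exact h.card i h1
    · rw [h1, Function.update_self]
      have hsub : S ∪ N ⊆ insert v ((Finset.range (m + 1)).biUnion
          (fun i => G.neighborFinset (Function.update p m u i))) := by
        intro s hs
        rw [Finset.mem_insert, Finset.mem_biUnion]
        rcases Finset.mem_union.1 hs with h2 | h2
        · right
          obtain ⟨hsU, w, hw, hws⟩ := (hSm s).1 h2
          obtain ⟨i, hi, hadj⟩ := (hp.2 w hw).2 s hsU hws
          refine ⟨i, Finset.mem_range.2 (by omega), ?_⟩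
          rw [SimpleGraph.mem_neighborFinset, Function.update_of_ne (by omega)]
          exact hadj.symm
        · obtain ⟨hr, h3 | h3⟩ := (hNm s).1 h2
          · rcases hdis with ⟨_, h4⟩ | ⟨_, h4⟩
            · left; rw [h3, h4]
            · exact absurd (h3 ▸ h4) (hNU s h2)
          · right
            refine ⟨m, Finset.mem_range.2 (by omega), ?_⟩
            rw [SimpleGraph.mem_neighborFinset, Function.update_self]
            exact h3.symm
      calc (S ∪ N).card ≤ _ := Finset.card_le_card hsub
        _ ≤ _ := Finset.card_insert_le _ _
        _ ≤ t * G.maxDegree + 1 := by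
          gcongr
          calc _ ≤ (Finset.range (m + 1)).card * G.maxDegree :=
                Finset.card_biUnion_le_card_mul _ _ _ (fun i _ => by
                  rw [SimpleGraph.card_neighborFinset_eq_degree]
                  exact G.degree_le_maxDegree _)
            _ ≤ _ := by
              rw [Finset.card_range]
              exact Nat.mul_le_mul_right _ hmt
  · intro a ha
    have haU : a ∉ U := fun hh => ha (hUU hh)
    by_cases hac : Rch G U v a
    · have hin : ∀ w, Rch G (U ∪ N) a w → Rch G U v w := fun w hw =>
        Relation.ReflTransGen.trans hac (Rch.mono hUU hw)
      refine ⟨n, by omega, ?_, m + 1, Function.update p m u, hIP, ?_⟩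
      · intro w hw s hs hws
        rw [Function.update_self]
        rcases Finset.mem_union.1 hs with h2 | h2
        · exact Finset.mem_union_left _ ((hSm s).2 ⟨h2, w, hin w hw, hws⟩)
        · exact Finset.mem_union_right _ h2
      · intro w hw
        have hwN : w ∉ N := fun hh => Rch.notMem hw ha (Finset.mem_union_right _ hh)
        have hwN' : ¬ (w = u ∨ G.Adj w u) := fun hh => hwN ((hNm w).2 ⟨hin w hw, hh⟩)
        push Not at hwN'
        refine ⟨fun i hi => ?_, fun s hs hws => ?_⟩
        · by_cases h1 : i = m
          · rw [h1, Function.update_self]; exact hwN'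
          · rw [Function.update_of_ne h1]
            exact (hp.2 w (hin w hw)).1 i (by omega)
        · rcases Finset.mem_union.1 hs with h2 | h2
          · obtain ⟨i, hi, hadj⟩ := (hp.2 w (hin w hw)).2 s h2 hws
            exact ⟨i, by omega, by rwa [Function.update_of_ne (by omega)]⟩
          · rcases ((hNm s).1 h2).2 with h3 | h3
            · exact absurd (h3 ▸ hws) hwN'.2
            · exact ⟨m, by omega, by rwa [Function.update_self]⟩
    · obtain ⟨y', hy', hS', m', p', hp', hg'⟩ := h.comp a haU
      have hin : ∀ w, Rch G (U ∪ N) a w → Rch G U a w := fun w hw => Rch.mono hUU hw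
      have hsU : ∀ w, Rch G (U ∪ N) a w → ∀ s ∈ U ∪ N, G.Adj w s → s ∈ U := by
        intro w hw s hs hws
        rcases Finset.mem_union.1 hs with h2 | h2
        · exact h2
        · exfalso
          have hvs := ((hNm s).1 h2).1
          have hvw : Rch G U v w := hclosed s w hvs hws.symm (Rch.notMem (hin w hw) haU)
          exact hac (Relation.ReflTransGen.trans hvw (Rch.symm (hin w hw)))
      refine ⟨y', by omega, ?_, m', p', hp', ?_⟩
      · intro w hw s hs hws
        rw [hB y' hy']
        exact hS' w (hin w hw) s (hsU w hw s hs hws) hws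
      · intro w hw
        exact ⟨(hg' w (hin w hw)).1, fun s hs hws =>
          (hg' w (hin w hw)).2 s (hsU w hw s hs hws) hws⟩

lemma St_s6.init {V : Type} (G : SimpleGraph V) (b : ℕ) (v0 : V) :
    St_s6 G b ∅ 1 (fun _ => 0) (fun _ => ∅) := by
  refine ⟨by omega, fun i h1 h2 => by omega, by simp, by simp, by simp, by simp, ?_⟩
  intro v _
  refine ⟨0, by omega, by simp, 0, fun _ => v, ⟨fun i j hi => by omega, fun i j hi => by omega⟩, ?_⟩
  intro w hw
  exact ⟨fun i hi => by omega, by simp⟩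

lemma St_s6.exists_full {V : Type} [Fintype V] {G : SimpleGraph V} [DecidableRel G.Adj] {t : ℕ}
    (ht : 4 ≤ t) (hG : CgeFree G t) : ∀ (k : ℕ) (U : Finset V) (n : ℕ) (par : ℕ → ℕ)
    (B : ℕ → Finset V), Fintype.card V - U.card ≤ k → St_s6 G (t * G.maxDegree + 1) U n par B →
    ∃ n par B, St_s6 G (t * G.maxDegree + 1) Finset.univ n par B := by
  intro k
  induction k with
  | zero =>
    intro U n par B hk h
    have : U = Finset.univ := by
      rw [← Finset.card_eq_iff_eq_univ]
      have := Finset.card_le_univ U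
      omega
    subst this
    exact ⟨n, par, B, h⟩
  | succ k ih =>
    intro U n par B hk h
    by_cases hU : ∃ v, v ∉ U
    · obtain ⟨v, hv⟩ := hU
      obtain ⟨U', n', par', B', h', hlt⟩ := h.step ht hG hv
      have := Finset.card_lt_card hlt
      exact ih U' n' par' B' (by omega) h'
    · push Not at hU
      have : U = Finset.univ := Finset.eq_univ_iff_forall.2 hU
      subst this
      exact ⟨n, par, B, h⟩

/-- tree of a parent function -/
def PT (n : ℕ) (par : ℕ → ℕ) : SimpleGraph (Fin n) where
  Adj i j := (0 < (i : ℕ) ∧ par i = j ∧ par i < i) ∨ (0 < (j : ℕ) ∧ par j = i ∧ par j < j)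
  symm := ⟨fun _ _ h => h.symm⟩
  loopless := ⟨fun i h => by rcases h with h | h <;> omega⟩

lemma PT.induce_conn {n : ℕ} {par : ℕ → ℕ} (hpar : ∀ i, 0 < i → i < n → par i < i)
    (A : Set (Fin n)) (r : Fin n) (hr : r ∈ A)
    (h : ∀ i ∈ A, i ≠ r → 0 < (i : ℕ) ∧ ∃ j ∈ A, (j : ℕ) = par i) :
    ((PT n par).induce A).Connected := by
  have key : ∀ (k : ℕ) (i : Fin n) (hi : i ∈ A), (i : ℕ) = k →
      ((PT n par).induce A).Reachable ⟨i, hi⟩ ⟨r, hr⟩ := by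
    intro k
    induction k using Nat.strong_induction_on with
    | _ k ih =>
      intro i hi hik
      by_cases hir : i = r
      · subst hir; exact SimpleGraph.Reachable.refl _
      · obtain ⟨h0, j, hj, hji⟩ := h i hi hir
        have hlt := hpar i h0 i.2
        have h1 := ih j (by omega) j hj rfl
        refine SimpleGraph.Reachable.trans (SimpleGraph.Adj.reachable ?_) h1
        exact Or.inl ⟨h0, hji.symm, hlt⟩
  haveI : Nonempty A := ⟨⟨r, hr⟩⟩
  exact SimpleGraph.Connected.mk fun a b =>
    (key _ a.1 a.2 rfl).trans (key _ b.1 b.2 rfl).symm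

lemma PT.conn {n : ℕ} {par : ℕ → ℕ} (hn : 0 < n) (hpar : ∀ i, 0 < i → i < n → par i < i) :
    (PT n par).Connected := by
  have := PT.induce_conn hpar Set.univ ⟨0, hn⟩ trivial (fun i _ hi => by
    have h0 : 0 < (i : ℕ) := by
      by_contra hc
      exact hi (Fin.ext (by simp; omega))
    exact ⟨h0, ⟨par i, (hpar i h0 i.2).trans i.2⟩, trivial, rfl⟩)
  exact (SimpleGraph.induceUnivIso _).connected_iff.1 this

lemma PT.acyclic {n : ℕ} {par : ℕ → ℕ} (hn : 0 < n) (hpar : ∀ i, 0 < i → i < n → par i < i) :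
    (PT n par).IsAcyclic := by
  classical
  have hc := PT.conn hn hpar
  refine (SimpleGraph.isTree_iff_connected_and_card.2 ⟨hc, ?_⟩).isAcyclic
  apply le_antisymm _ hc.card_vert_le_card_edgeSet_add_one
  obtain ⟨k, rfl⟩ : ∃ k, n = k + 1 := ⟨n - 1, by omega⟩
  have hsurj : (PT (k + 1) par).edgeSet ⊆ Set.range (fun i : Fin k =>
      s(i.succ, (⟨par i.succ, (hpar i.succ (by simp) i.succ.2).trans i.succ.2⟩ : Fin (k + 1)))) := by
    have aux : ∀ a b : Fin (k + 1), 0 < (a : ℕ) → par a = b → s(a, b) ∈ Set.range (fun i : Fin k =>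
      s(i.succ, (⟨par i.succ, (hpar i.succ (by simp) i.succ.2).trans i.succ.2⟩ : Fin (k + 1)))) := by
      intro a b ha hab
      obtain ⟨i, rfl⟩ := Fin.exists_succ_eq.2 (show a ≠ 0 by rintro rfl; simp at ha)
      refine ⟨i, ?_⟩
      have : (⟨par i.succ, (hpar i.succ (by simp) i.succ.2).trans i.succ.2⟩ : Fin (k + 1)) = b :=
        Fin.ext hab
      simp only [this]
    intro e
    induction e using Sym2.ind with
    | _ a b =>
      intro hab
      rcases hab with hab | hab
      · exact aux a b hab.1 hab.2.1
      · rw [Sym2.eq_swap]; exact aux b a hab.1 hab.2.1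
  have h1 := Nat.card_mono (Set.finite_range _) hsurj
  have h2 := Finite.card_range_le (fun i : Fin k =>
      s(i.succ, (⟨par i.succ, (hpar i.succ (by simp) i.succ.2).trans i.succ.2⟩ : Fin (k + 1))))
  simp only [Nat.card_eq_fintype_card, Fintype.card_fin] at h1 h2 ⊢
  omega

/-- for every `t ≥ 4` there is a constant `c_t` such that every
`C_{≥t}`-free graph `G` admits a tree decomposition of width at most `c_t · Δ(G)`,
i.e. has treewidth at most `c_t · Δ(G)`. -/
theorem stmt6 (t : ℕ) (ht : 4 ≤ t) :
    ∃ c : ℕ, ∀ (V : Type) [Fintype V] (G : SimpleGraph V) [DecidableRel G.Adj],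
      CgeFree G t →
      ∃ (n : ℕ) (T : SimpleGraph (Fin n)) (B : Fin n → Finset V),
        T.Connected ∧ T.IsAcyclic ∧
        (∀ v : V, ∃ x, v ∈ B x) ∧
        (∀ u v : V, G.Adj u v → ∃ x, u ∈ B x ∧ v ∈ B x) ∧
        (∀ v : V, (T.induce {x : Fin n | v ∈ B x}).Connected) ∧
        (∀ x, (B x).card ≤ c * G.maxDegree + 1) := by
  classical
  refine ⟨t, fun V _ G _ hG => ?_⟩
  have hex : ∃ n par B, St_s6 G (t * G.maxDegree + 1) Finset.univ n par B := by
    rcases isEmpty_or_nonempty V with hV | ⟨⟨v0⟩⟩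
    · refine ⟨1, fun _ => 0, fun _ => ∅, by omega, fun i h1 h2 => by omega, by simp, ?_, ?_,
        by simp, ?_⟩
      · exact fun v => hV.elim v
      · exact fun v => hV.elim v
      · exact fun v => hV.elim v
    · exact St_s6.exists_full ht hG _ ∅ 1 _ _ le_rfl (St_s6.init G _ v0)
  obtain ⟨n, par, B, h⟩ := hex
  refine ⟨n, PT n par, fun i => B i, PT.conn h.pos h.par_lt, PT.acyclic h.pos h.par_lt,
    ?_, ?_, ?_, fun x => h.card x x.2⟩
  · intro v
    obtain ⟨r, hr, hv, _⟩ := h.root v (Finset.mem_univ v)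
    exact ⟨⟨r, hr⟩, hv⟩
  · intro u v huv
    obtain ⟨x, hx, h1, h2⟩ := h.edge u (Finset.mem_univ u) v (Finset.mem_univ v) huv
    exact ⟨⟨x, hx⟩, h1, h2⟩
  · intro v
    obtain ⟨r, hr, hv, hroot⟩ := h.root v (Finset.mem_univ v)
    refine PT.induce_conn h.par_lt _ ⟨r, hr⟩ hv ?_
    intro i hi hir
    obtain ⟨h0, h1⟩ := hroot i i.2 hi (fun he => hir (Fin.ext he))
    exact ⟨h0, ⟨par i, (h.par_lt i h0 i.2).trans i.2⟩, h1, rfl⟩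

end Paper
end
end

section
/- Let (H,η) be an extended strip decomposition of a graph G and let I be an independent set in G. Then the family A_I of atoms of (H,η) is independent (i.e., pairwise non-conflicting), and I ⊆ ⋃ A_I. -/
noncomputable section

namespace Paper

/-- The vertex sets `A` and `B` are non-adjacent in `G`. -/
def NonAdj {V : Type} (G : SimpleGraph V) (A B : Set V) : Prop :=
  ∀ x ∈ A, ∀ y ∈ B, ¬ G.Adj x y

/-- `A` intersects or is adjacent to `B` in `G`. -/
def Touches {V : Type} (G : SimpleGraph V) (A B : Set V) : Prop :=
  ∃ x ∈ A, ∃ y ∈ B, x = y ∨ G.Adj x y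

/-- `T` is (the vertex set of) a triangle in `H`. -/
def IsTriangle {W : Type} (H : SimpleGraph W) (T : Set W) : Prop :=
  ∃ u v x, H.Adj u v ∧ H.Adj u x ∧ H.Adj v x ∧ T = {u, v, x}

/-- An extended strip decomposition of the graph `G`, with pattern graph `H`.
`vmap u` is `η(u)` for a vertex `u` of `H`, `emap e` is `η(e)` for an edge `e` of `H`,
`endmap u v` is `η(uv, u)` for an edge `uv` of `H` (with distinguished endpoint `u`),
and `tmap T` is `η(T)` for a triangle `T` of `H`.  (The values of `emap`, `endmap`, `tmap`
on non-edges/non-triangles are irrelevant.) -/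
structure ESD {V W : Type} (G : SimpleGraph V) (H : SimpleGraph W) where
  vmap : W → Set V
  emap : Sym2 W → Set V
  endmap : W → W → Set V
  tmap : Set W → Set V
  endmap_subset : ∀ u v, H.Adj u v → endmap u v ⊆ emap s(u, v)
  cover : ∀ x : V, (∃ u, x ∈ vmap u) ∨ (∃ e ∈ H.edgeSet, x ∈ emap e) ∨
    (∃ T, IsTriangle H T ∧ x ∈ tmap T)
  disj_vv : ∀ u u', u ≠ u' → Disjoint (vmap u) (vmap u')
  disj_ee : ∀ e e', e ∈ H.edgeSet → e' ∈ H.edgeSet → e ≠ e' → Disjoint (emap e) (emap e')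
  disj_tt : ∀ T T', IsTriangle H T → IsTriangle H T' → T ≠ T' → Disjoint (tmap T) (tmap T')
  disj_ve : ∀ u e, e ∈ H.edgeSet → Disjoint (vmap u) (emap e)
  disj_vt : ∀ u T, IsTriangle H T → Disjoint (vmap u) (tmap T)
  disj_et : ∀ e T, e ∈ H.edgeSet → IsTriangle H T → Disjoint (emap e) (tmap T)
  fully_adj : ∀ v u u', H.Adj v u → H.Adj v u' → u ≠ u' →
    ∀ x ∈ endmap v u, ∀ y ∈ endmap v u', G.Adj x y
  edge_cond : ∀ x y, G.Adj x y →
    (∃ u, x ∈ vmap u ∧ y ∈ vmap u) ∨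
    (∃ e ∈ H.edgeSet, x ∈ emap e ∧ y ∈ emap e) ∨
    (∃ T, IsTriangle H T ∧ x ∈ tmap T ∧ y ∈ tmap T) ∨
    (∃ v u u', H.Adj v u ∧ H.Adj v u' ∧ u ≠ u' ∧ x ∈ endmap v u ∧ y ∈ endmap v u') ∨
    (∃ v u, H.Adj v u ∧ ((x ∈ vmap v ∧ y ∈ endmap v u) ∨ (y ∈ vmap v ∧ x ∈ endmap v u))) ∨
    (∃ T u u', IsTriangle H T ∧ u ∈ T ∧ u' ∈ T ∧ H.Adj u u' ∧
      ((x ∈ tmap T ∧ y ∈ endmap u u' ∩ endmap u' u) ∨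
       (y ∈ tmap T ∧ x ∈ endmap u u' ∩ endmap u' u)))

/-- Names (labels) for the atoms of an extended strip decomposition with pattern graph on `W`:
`bot e = A_e^⊥`, `half u v = A_{uv}^u`, `full e = A_e^{uv}` for an edge `e = uv`,
`vert u = A_u` for a vertex `u`, and `tri T = A_T` for a triangle `T`. -/
inductive AtomLabel (W : Type) where
  | bot : Sym2 W → AtomLabel W
  | half : W → W → AtomLabel W
  | full : Sym2 W → AtomLabel W
  | vert : W → AtomLabel W
  | tri : Set W → AtomLabel W

/-- An atom label is valid if the underlying feature is really an edge / a triangle of `H`. -/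
def ValidAtom {W : Type} (H : SimpleGraph W) : AtomLabel W → Prop
  | .bot e => e ∈ H.edgeSet
  | .half u v => H.Adj u v
  | .full e => e ∈ H.edgeSet
  | .vert _ => True
  | .tri T => IsTriangle H T

/-- The vertex set of `G` corresponding to an atom label. -/
def ESD.atomSet {V W : Type} {G : SimpleGraph V} {H : SimpleGraph W} (D : ESD G H) :
    AtomLabel W → Set V
  | .bot e => D.emap e \
      Sym2.lift ⟨fun u v => D.endmap u v ∪ D.endmap v u, fun _ _ => Set.union_comm _ _⟩ e
  | .half u v => D.vmap u ∪ (D.emap s(u, v) \ D.endmap v u)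
  | .full e =>
      Sym2.lift ⟨fun u v => D.vmap u ∪ D.vmap v, fun _ _ => Set.union_comm _ _⟩ e ∪
        D.emap e ∪ ⋃ T ∈ {T : Set W | IsTriangle H T ∧ ∀ x ∈ e, x ∈ T}, D.tmap T
  | .vert u => D.vmap u
  | .tri T => D.tmap T

/-- The four atoms associated with the edge `uv` of `H`. -/
def Quad {W : Type} (u v : W) : Set (AtomLabel W) :=
  {AtomLabel.bot s(u, v), AtomLabel.half u v, AtomLabel.half v u, AtomLabel.full s(u, v)}

/-- Two atom labels are conflicting. -/
def Conflict {W : Type} (H : SimpleGraph W) (a b : AtomLabel W) : Prop :=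
  (∃ u v, H.Adj u v ∧ a ≠ b ∧ a ∈ Quad u v ∧ b ∈ Quad u v) ∨
  (∃ u v, H.Adj u v ∧
    (((a = AtomLabel.half u v ∨ a = AtomLabel.full s(u, v)) ∧ b = AtomLabel.vert u) ∨
     ((b = AtomLabel.half u v ∨ b = AtomLabel.full s(u, v)) ∧ a = AtomLabel.vert u))) ∨
  (∃ u v v', H.Adj u v ∧ H.Adj u v' ∧ v ≠ v' ∧
    (a = AtomLabel.half u v ∨ a = AtomLabel.full s(u, v)) ∧
    (b = AtomLabel.half u v' ∨ b = AtomLabel.full s(u, v'))) ∨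
  (∃ u v T, H.Adj u v ∧ IsTriangle H T ∧ u ∈ T ∧ v ∈ T ∧
    ((a = AtomLabel.full s(u, v) ∧ b = AtomLabel.tri T) ∨
     (b = AtomLabel.full s(u, v) ∧ a = AtomLabel.tri T)))

/-- A family of atoms is independent if its members are pairwise non-conflicting. -/
def IndepFamily {W : Type} (H : SimpleGraph W) (𝒜 : Set (AtomLabel W)) : Prop :=
  ∀ a ∈ 𝒜, ∀ b ∈ 𝒜, ¬ Conflict H a b

/-- The vertex `z` of `G` is peripheral in the extended strip decomposition `D`. -/
def Peripheral {V W : Type} {G : SimpleGraph V} {H : SimpleGraph W} (D : ESD G H)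
    (z : V) : Prop :=
  ∃ wz u, H.Adj wz u ∧ (∀ u', H.Adj wz u' → u' = u) ∧ D.endmap wz u = {z}
/-- The family `𝒜_I` of atoms associated with an independent set `I`. -/
def atomFamilyOf {V W : Type} {G : SimpleGraph V} {H : SimpleGraph W} (D : ESD G H)
    (I : Set V) : Set (AtomLabel W) :=
  {a | (∃ u v, H.Adj u v ∧ (I ∩ D.endmap u v).Nonempty ∧ (I ∩ D.endmap v u).Nonempty ∧
          a = AtomLabel.full s(u, v)) ∨
       (∃ u v, H.Adj u v ∧ (I ∩ D.endmap u v).Nonempty ∧ I ∩ D.endmap v u = ∅ ∧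
          a = AtomLabel.half u v) ∨
       (∃ u v, H.Adj u v ∧ I ∩ (D.endmap u v ∪ D.endmap v u) = ∅ ∧
          a = AtomLabel.bot s(u, v)) ∨
       (∃ u, (∀ v, H.Adj u v → I ∩ D.endmap u v = ∅) ∧ a = AtomLabel.vert u) ∨
       (∃ T, IsTriangle H T ∧
          (∀ u v, u ∈ T → v ∈ T → H.Adj u v → I ∩ D.endmap u v = ∅ ∨ I ∩ D.endmap v u = ∅) ∧
          a = AtomLabel.tri T)}

section helpers
variable {V W : Type} {G : SimpleGraph V} {H : SimpleGraph W} (D : ESD G H) (I : Set V)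

theorem mem_full {u v : W} (h : AtomLabel.full s(u, v) ∈ atomFamilyOf D I) :
    (I ∩ D.endmap u v).Nonempty ∧ (I ∩ D.endmap v u).Nonempty := by
  rcases h with ⟨a, b, _, h1, h2, h⟩ | ⟨a, b, _, h1, h2, h⟩ | ⟨a, b, _, h1, h⟩ | ⟨a, _, h⟩ |
    ⟨T, _, _, h⟩
  · rw [AtomLabel.full.injEq, Sym2.eq_iff] at h
    rcases h with ⟨rfl, rfl⟩ | ⟨rfl, rfl⟩
    · exact ⟨h1, h2⟩
    · exact ⟨h2, h1⟩
  all_goals simp at h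

theorem mem_half {u v : W} (h : AtomLabel.half u v ∈ atomFamilyOf D I) :
    (I ∩ D.endmap u v).Nonempty ∧ ¬ (I ∩ D.endmap v u).Nonempty := by
  rcases h with ⟨a, b, _, h1, h2, h⟩ | ⟨a, b, _, h1, h2, h⟩ | ⟨a, b, _, h1, h⟩ | ⟨a, _, h⟩ |
    ⟨T, _, _, h⟩
  · simp at h
  · rw [AtomLabel.half.injEq] at h
    obtain ⟨rfl, rfl⟩ := h
    exact ⟨h1, Set.not_nonempty_iff_eq_empty.2 h2⟩
  all_goals simp at h

theorem mem_bot {u v : W} (h : AtomLabel.bot s(u, v) ∈ atomFamilyOf D I) :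
    ¬ (I ∩ D.endmap u v).Nonempty ∧ ¬ (I ∩ D.endmap v u).Nonempty := by
  rcases h with ⟨a, b, _, h1, h2, h⟩ | ⟨a, b, _, h1, h2, h⟩ | ⟨a, b, _, h1, h⟩ | ⟨a, _, h⟩ |
    ⟨T, _, _, h⟩
  · simp at h
  · simp at h
  · rw [AtomLabel.bot.injEq, Sym2.eq_iff] at h
    rw [Set.inter_union_distrib_left, Set.union_empty_iff] at h1
    simp only [Set.not_nonempty_iff_eq_empty]
    rcases h with ⟨rfl, rfl⟩ | ⟨rfl, rfl⟩
    · exact h1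
    · exact h1.symm
  all_goals simp at h

theorem mem_vert {u : W} (h : AtomLabel.vert u ∈ atomFamilyOf D I) (v : W) (hv : H.Adj u v) :
    ¬ (I ∩ D.endmap u v).Nonempty := by
  rcases h with ⟨a, b, _, h1, h2, h⟩ | ⟨a, b, _, h1, h2, h⟩ | ⟨a, b, _, h1, h⟩ | ⟨a, h1, h⟩ |
    ⟨T, _, _, h⟩
  · simp at h
  · simp at h
  · simp at h
  · rw [AtomLabel.vert.injEq] at h
    subst h
    exact Set.not_nonempty_iff_eq_empty.2 (h1 v hv)
  · simp at h

theorem mem_tri {T : Set W} (h : AtomLabel.tri T ∈ atomFamilyOf D I) (u v : W) (hu : u ∈ T)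
    (hv : v ∈ T) (huv : H.Adj u v) :
    ¬ ((I ∩ D.endmap u v).Nonempty ∧ (I ∩ D.endmap v u).Nonempty) := by
  rcases h with ⟨a, b, _, h1, h2, h⟩ | ⟨a, b, _, h1, h2, h⟩ | ⟨a, b, _, h1, h⟩ | ⟨a, h1, h⟩ |
    ⟨T, _, h1, h⟩
  · simp at h
  · simp at h
  · simp at h
  · simp at h
  · rw [AtomLabel.tri.injEq] at h
    subst h
    rintro ⟨p, q⟩
    rcases h1 u v hu hv huv with h | h
    · exact p.ne_empty h
    · exact q.ne_empty h

theorem mem_hf {u v : W} {a : AtomLabel W} (ha : a ∈ atomFamilyOf D I)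
    (h : a = AtomLabel.half u v ∨ a = AtomLabel.full s(u, v)) :
    (I ∩ D.endmap u v).Nonempty := by
  rcases h with rfl | rfl
  · exact (mem_half D I ha).1
  · exact (mem_full D I ha).1

end helpers

/-- for every independent set `I` in `G`, the family `𝒜_I` of atoms of an
extended strip decomposition `(H, η)` of `G` is independent, and `I ⊆ ⋃ 𝒜_I`. -/
theorem stmt7 {V W : Type} (G : SimpleGraph V) (H : SimpleGraph W) (D : ESD G H)
    (I : Set V) (hI : ∀ x ∈ I, ∀ y ∈ I, ¬ G.Adj x y) :
    IndepFamily H (atomFamilyOf D I) ∧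
      ∀ x ∈ I, ∃ a ∈ atomFamilyOf D I, x ∈ D.atomSet a := by
  refine ⟨?_, ?_⟩
  · intro a ha b hb hc
    rcases hc with ⟨u, v, huv, hab, h1, h2⟩ | ⟨u, v, huv, ⟨h, rfl⟩ | ⟨h, rfl⟩⟩ |
      ⟨u, v, v', huv, huv', hne, h1, h2⟩ | ⟨u, v, T, huv, hT, hu, hv, ⟨rfl, rfl⟩ | ⟨rfl, rfl⟩⟩
    · simp only [Quad, Set.mem_insert_iff, Set.mem_singleton_iff] at h1 h2
      rcases h1 with rfl | rfl | rfl | rfl <;> rcases h2 with rfl | rfl | rfl | rfl <;>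
      first
      | exact hab rfl
      | (have A := mem_bot D I ha; have B := mem_half D I hb; tauto)
      | (have A := mem_bot D I ha; have B := mem_full D I hb; tauto)
      | (have A := mem_half D I ha; have B := mem_bot D I hb; tauto)
      | (have A := mem_half D I ha; have B := mem_half D I hb; tauto)
      | (have A := mem_half D I ha; have B := mem_full D I hb; tauto)
      | (have A := mem_full D I ha; have B := mem_bot D I hb; tauto)
      | (have A := mem_full D I ha; have B := mem_half D I hb; tauto)
    · exact mem_vert D I hb v huv (mem_hf D I ha h)
    · exact mem_vert D I ha v huv (mem_hf D I hb h)
    · obtain ⟨x, hx, hx'⟩ := mem_hf D I ha h1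
      obtain ⟨y, hy, hy'⟩ := mem_hf D I hb h2
      exact hI x hx y hy (D.fully_adj u v v' huv huv' hne x hx' y hy')
    · exact mem_tri D I hb u v hu hv huv (mem_full D I ha)
    · exact mem_tri D I ha u v hu hv huv (mem_full D I hb)
  · intro x hx
    rcases D.cover x with ⟨u, hu⟩ | ⟨e, he, hxe⟩ | ⟨T, hT, hxT⟩
    · by_cases h : ∀ v, H.Adj u v → I ∩ D.endmap u v = ∅
      · exact ⟨.vert u, Or.inr (Or.inr (Or.inr (Or.inl ⟨u, h, rfl⟩))), hu⟩
      · push Not at h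
        obtain ⟨v, huv, h1⟩ := h
        rcases Set.eq_empty_or_nonempty (I ∩ D.endmap v u) with h2 | h2
        · exact ⟨.half u v, Or.inr (Or.inl ⟨u, v, huv, h1, h2, rfl⟩), Or.inl hu⟩
        · exact ⟨.full s(u, v), Or.inl ⟨u, v, huv, h1, h2, rfl⟩, Or.inl (Or.inl (Or.inl hu))⟩
    · induction e using Sym2.ind with
      | _ u v =>
        have huv : H.Adj u v := he
        rcases Set.eq_empty_or_nonempty (I ∩ D.endmap u v) with h1 | h1 <;>
        rcases Set.eq_empty_or_nonempty (I ∩ D.endmap v u) with h2 | h2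
        · refine ⟨.bot s(u, v), Or.inr (Or.inr (Or.inl ⟨u, v, huv, ?_, rfl⟩)), hxe, ?_⟩
          · rw [Set.inter_union_distrib_left, h1, h2, Set.union_empty]
          · rintro (h | h)
            · exact (h1 ▸ (⟨hx, h⟩ : x ∈ I ∩ D.endmap u v) : x ∈ (∅ : Set V))
            · exact (h2 ▸ (⟨hx, h⟩ : x ∈ I ∩ D.endmap v u) : x ∈ (∅ : Set V))
        · refine ⟨.half v u, Or.inr (Or.inl ⟨v, u, huv.symm, h2, h1, rfl⟩), Or.inr ⟨?_, ?_⟩⟩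
          · rw [Sym2.eq_swap]; exact hxe
          · intro h
            exact (h1 ▸ (⟨hx, h⟩ : x ∈ I ∩ D.endmap u v) : x ∈ (∅ : Set V))
        · refine ⟨.half u v, Or.inr (Or.inl ⟨u, v, huv, h1, h2, rfl⟩), Or.inr ⟨hxe, ?_⟩⟩
          intro h
          exact (h2 ▸ (⟨hx, h⟩ : x ∈ I ∩ D.endmap v u) : x ∈ (∅ : Set V))
        · exact ⟨.full s(u, v), Or.inl ⟨u, v, huv, h1, h2, rfl⟩, Or.inl (Or.inr hxe)⟩
    · by_cases h : ∀ u v, u ∈ T → v ∈ T → H.Adj u v →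
          I ∩ D.endmap u v = ∅ ∨ I ∩ D.endmap v u = ∅
      · exact ⟨.tri T, Or.inr (Or.inr (Or.inr (Or.inr ⟨T, hT, h, rfl⟩))), hxT⟩
      · push Not at h
        obtain ⟨u, v, hu, hv, huv, h1, h2⟩ := h
        refine ⟨.full s(u, v), Or.inl ⟨u, v, huv, h1, h2, rfl⟩, Or.inr ?_⟩
        refine Set.mem_biUnion (x := T) ⟨hT, ?_⟩ hxT
        intro y hy
        rcases Sym2.mem_iff.1 hy with rfl | rfl
        · exact hu
        · exact hv


end Paper
end
end

section
/- Let G be a graph with weight function w, let (H,η) be an extended strip decomposition of G, and for every atom A of (H,η) let I(A) ⊆ A be given; let H', w', and a be as defined. If A is an independent family of atoms of (H,η), then M(A) is a matching in H' and w'(M(A)) ≥ −a + Σ_{A ∈ A} w(I(A)). -/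
noncomputable section

namespace Paper

/-- Names for the edges of the graph `H'` obtained from `H` by adding, for every edge
`e` of `H`, a new vertex `x_e` adjacent to both endpoints of `e`:
`Sum.inl e` is the original edge `e` of `H`, and `Sum.inr (e, u)` is the edge `x_e u`. -/
abbrev EdgeName (W : Type) := Sym2 W ⊕ Sym2 W × W

/-- The graph `H'` obtained from `H` by adding, for every edge `e = uv` of `H`, a new
vertex `x_e` (represented by `Sum.inr e`) adjacent exactly to `u` and `v`. -/
def Hprime {W : Type} (H : SimpleGraph W) : SimpleGraph (W ⊕ Sym2 W) :=
  SimpleGraph.fromRel (fun a b =>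
    match a, b with
    | Sum.inl u, Sum.inl v => H.Adj u v
    | Sum.inl u, Sum.inr e => e ∈ H.edgeSet ∧ u ∈ e
    | _, _ => False)

/-- The unordered pair of vertices of `H'` corresponding to an edge name. -/
def enameToSym {W : Type} : EdgeName W → Sym2 (W ⊕ Sym2 W)
  | Sum.inl e => Sym2.map Sum.inl e
  | Sum.inr (e, u) => s(Sum.inr e, Sum.inl u)

/-- `M` (a set of edge names) is a matching in the graph `H'`: all its members are edges of
`H'`, and distinct members share no endpoint. -/
def IsMatchingIn {W : Type} (H : SimpleGraph W) (M : Set (EdgeName W)) : Prop :=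
  (∀ m ∈ M, enameToSym m ∈ (Hprime H).edgeSet) ∧
  ∀ m ∈ M, ∀ m' ∈ M, m ≠ m' → ∀ x, x ∈ enameToSym m → x ∉ enameToSym m'

/-- `w(I(A))` as an integer, for the chosen independent sets `Ifun`. -/
def wIat {V W : Type} (w : V → ℕ) (Ifun : AtomLabel W → Set V) (a : AtomLabel W) : ℤ :=
  (wsum w (Ifun a) : ℤ)

open scoped Classical in
/-- `f(A_e^u)`, expressed as a function of the endpoint `u` and the unordered edge `e`. -/
def halfW {W : Type} (f : AtomLabel W → ℤ) (u : W) (e : Sym2 W) : ℤ :=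
  Sym2.lift ⟨fun a b =>
    if a = u then f (AtomLabel.half u b) else if b = u then f (AtomLabel.half u a) else 0,
    by intro a b; by_cases ha : a = u <;> by_cases hb : b = u <;> simp [ha, hb]⟩ e

/-- `Σ_{T ∈ 𝒯(e)} f(A_T)`, the sum over all triangles of `H` containing the edge `e`. -/
def triSumW {W : Type} (H : SimpleGraph W) (f : AtomLabel W → ℤ) (e : Sym2 W) : ℤ :=
  ∑ᶠ T ∈ {T : Set W | IsTriangle H T ∧ ∀ x ∈ e, x ∈ T}, f (AtomLabel.tri T)

/-- `f(A_u) + f(A_v)` for the two endpoints `u`, `v` of the edge `e`. -/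
def vertW {W : Type} (f : AtomLabel W → ℤ) (e : Sym2 W) : ℤ :=
  Sym2.lift ⟨fun u v => f (AtomLabel.vert u) + f (AtomLabel.vert v),
    fun _ _ => add_comm _ _⟩ e

/-- The edge-weight function `w'` on the edges of `H'`:
`w'(e) = f(A_e^{uv}) - f(A_u) - f(A_v) - f(A_e^⊥) - Σ_{T ∈ 𝒯(e)} f(A_T)` and
`w'(x_e u) = f(A_e^u) - f(A_u) - f(A_e^⊥)`, where `f(A) = w(I(A))`. -/
def wPrime {W : Type} (H : SimpleGraph W) (f : AtomLabel W → ℤ) : EdgeName W → ℤ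
  | Sum.inl e => f (AtomLabel.full e) - vertW f e - f (AtomLabel.bot e) - triSumW H f e
  | Sum.inr (e, u) => halfW f u e - f (AtomLabel.vert u) - f (AtomLabel.bot e)

/-- The constant `a = Σ_{v ∈ V(H)} w(I(A_v)) + Σ_{e ∈ E(H)} w(I(A_e^⊥)) + Σ_T w(I(A_T))`. -/
def aConst {W : Type} (H : SimpleGraph W) (f : AtomLabel W → ℤ) : ℤ :=
  (∑ᶠ u : W, f (AtomLabel.vert u)) + (∑ᶠ e ∈ H.edgeSet, f (AtomLabel.bot e)) +
    ∑ᶠ T ∈ {T : Set W | IsTriangle H T}, f (AtomLabel.tri T)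

/-- The set `M(𝒜)` of edges of `H'` associated with a family `𝒜` of atoms:
the edge `e` for each `A_e^{uv} ∈ 𝒜`, and the edge `x_e u` for each `A_e^u ∈ 𝒜`. -/
def matchOf {W : Type} (𝒜 : Set (AtomLabel W)) : Set (EdgeName W) :=
  {m | (∃ e, AtomLabel.full e ∈ 𝒜 ∧ m = Sum.inl e) ∨
       (∃ u v, AtomLabel.half u v ∈ 𝒜 ∧ m = Sum.inr (s(u, v), u))}


/-- The basic atoms charged by an atom. -/
def ch {W : Type} (H : SimpleGraph W) : AtomLabel W → Set (AtomLabel W)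
  | .bot e => {.bot e}
  | .half u v => {.vert u, .bot s(u, v)}
  | .full e => (AtomLabel.vert '' {u | u ∈ e}) ∪ ({.bot e} ∪
      AtomLabel.tri '' {T : Set W | IsTriangle H T ∧ ∀ x ∈ e, x ∈ T})
  | .vert u => {.vert u}
  | .tri T => {.tri T}

/-- All basic valid atoms. -/
def basicAtoms {W : Type} (H : SimpleGraph W) : Set (AtomLabel W) :=
  (AtomLabel.vert '' Set.univ ∪ AtomLabel.bot '' H.edgeSet) ∪
    AtomLabel.tri '' {T : Set W | IsTriangle H T}

theorem finite_atomLabel {W : Type} [Finite W] : Finite (AtomLabel W) := by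
  let g : Sym2 W ⊕ (W × W) ⊕ Sym2 W ⊕ W ⊕ Set W → AtomLabel W := fun x =>
    match x with
    | .inl e => .bot e
    | .inr (.inl p) => .half p.1 p.2
    | .inr (.inr (.inl e)) => .full e
    | .inr (.inr (.inr (.inl u))) => .vert u
    | .inr (.inr (.inr (.inr T))) => .tri T
  have : Finite (Sym2 W) := Quot.finite _
  apply Finite.of_surjective g
  rintro (e | ⟨u, v⟩ | e | u | T)
  · exact ⟨.inl e, rfl⟩
  · exact ⟨.inr (.inl (u, v)), rfl⟩
  · exact ⟨.inr (.inr (.inl e)), rfl⟩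
  · exact ⟨.inr (.inr (.inr (.inl u))), rfl⟩
  · exact ⟨.inr (.inr (.inr (.inr T))), rfl⟩

theorem ch_vert {W : Type} {H : SimpleGraph W} {A : AtomLabel W} (hA : ValidAtom H A) {u : W}
    (h : AtomLabel.vert u ∈ ch H A) :
    A = .vert u ∨ ∃ v, H.Adj u v ∧ (A = .half u v ∨ A = .full s(u, v)) := by
  rcases A with e | ⟨a, b⟩ | e | a | T <;> simp [ch] at h
  · subst h; exact Or.inr ⟨b, hA, Or.inl rfl⟩
  · obtain ⟨v, rfl⟩ := h
    exact Or.inr ⟨v, hA, Or.inr rfl⟩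
  · subst h; exact Or.inl rfl

theorem ch_bot {W : Type} {H : SimpleGraph W} {A : AtomLabel W} (hA : ValidAtom H A) {u v : W}
    (h : AtomLabel.bot s(u, v) ∈ ch H A) : H.Adj u v ∧ A ∈ Quad u v := by
  rcases A with e | ⟨a, b⟩ | e | a | T <;> simp [ch] at h
  · subst h; exact ⟨hA, by simp [Quad]⟩
  · rcases h with ⟨rfl, rfl⟩ | ⟨rfl, rfl⟩
    · exact ⟨hA, by simp [Quad]⟩
    · exact ⟨SimpleGraph.Adj.symm hA, by simp [Quad]⟩
  · subst h; exact ⟨hA, by simp [Quad]⟩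

theorem ch_tri {W : Type} {H : SimpleGraph W} {A : AtomLabel W} (hA : ValidAtom H A) {T : Set W}
    (h : AtomLabel.tri T ∈ ch H A) :
    A = .tri T ∨ ∃ u v, H.Adj u v ∧ IsTriangle H T ∧ u ∈ T ∧ v ∈ T ∧ A = .full s(u, v) := by
  rcases A with e | ⟨a, b⟩ | e | a | T <;> simp [ch] at h
  · induction e with | _ a b =>
    exact Or.inr ⟨a, b, hA, h.1, h.2 a (by simp), h.2 b (by simp), rfl⟩
  · subst h; exact Or.inl rfl

theorem tri_pairs {W : Type} {H : SimpleGraph W} {T : Set W} (hT : IsTriangle H T)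
    {a b c d : W} (hab : a ≠ b) (hcd : c ≠ d) (ha : a ∈ T) (hb : b ∈ T) (hc : c ∈ T)
    (hd : d ∈ T) : a = c ∨ a = d ∨ b = c ∨ b = d := by
  obtain ⟨x, y, z, -, -, -, rfl⟩ := hT
  simp only [Set.mem_insert_iff, Set.mem_singleton_iff] at ha hb hc hd
  grind

theorem ch_disj {W : Type} {H : SimpleGraph W} {𝒜 : Set (AtomLabel W)}
    (hvalid : ∀ a ∈ 𝒜, ValidAtom H a) (hindep : IndepFamily H 𝒜)
    {A B : AtomLabel W} (hA : A ∈ 𝒜) (hB : B ∈ 𝒜) {b : AtomLabel W}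
    (h1 : b ∈ ch H A) (h2 : b ∈ ch H B) : A = B := by
  by_contra hne
  have key := hindep A hA B hB
  have vA := hvalid A hA
  have vB := hvalid B hB
  have at_vertex : ∀ u v v', H.Adj u v → H.Adj u v' →
      (A = .half u v ∨ A = .full s(u, v)) → (B = .half u v' ∨ B = .full s(u, v')) → False := by
    intro u v v' h h' hA' hB'
    by_cases hv : v = v'
    · subst hv
      refine key (Or.inl ⟨u, v, h, hne, ?_, ?_⟩)
      · rcases hA' with rfl | rfl <;> simp [Quad]
      · rcases hB' with rfl | rfl <;> simp [Quad]
    · exact key (Or.inr (Or.inr (Or.inl ⟨u, v, v', h, h', hv, hA', hB'⟩)))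
  rcases b with e | ⟨a, b⟩ | e | u | T
  · induction e with | _ u v =>
    obtain ⟨h, q1⟩ := ch_bot vA h1
    obtain ⟨-, q2⟩ := ch_bot vB h2
    exact key (Or.inl ⟨u, v, h, hne, q1, q2⟩)
  · rcases A with e | ⟨a, b⟩ | e | a | T <;> simp [ch] at h1
  · rcases A with e | ⟨a, b⟩ | e | a | T <;> simp [ch] at h1
  · rcases ch_vert vA h1 with r1 | ⟨v, hv, r1⟩ <;> rcases ch_vert vB h2 with r2 | ⟨v', hv', r2⟩
    · exact hne (r1.trans r2.symm)
    · exact key (Or.inr (Or.inl ⟨u, v', hv', Or.inr ⟨r2, r1⟩⟩))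
    · exact key (Or.inr (Or.inl ⟨u, v, hv, Or.inl ⟨r1, r2⟩⟩))
    · exact at_vertex u v v' hv hv' r1 r2
  · rcases ch_tri vA h1 with r1 | ⟨a, b, hab, hT, ha, hb, r1⟩ <;>
      rcases ch_tri vB h2 with r2 | ⟨c, d, hcd, hT', hc, hd, r2⟩
    · exact hne (r1.trans r2.symm)
    · exact key (Or.inr (Or.inr (Or.inr ⟨c, d, T, hcd, hT', hc, hd, Or.inr ⟨r2, r1⟩⟩)))
    · exact key (Or.inr (Or.inr (Or.inr ⟨a, b, T, hab, hT, ha, hb, Or.inl ⟨r1, r2⟩⟩)))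
    · have r1' : A = .full s(b, a) := by rw [r1, Sym2.eq_swap]
      have r2' : B = .full s(d, c) := by rw [r2, Sym2.eq_swap]
      rcases tri_pairs hT hab.ne hcd.ne ha hb hc hd with rfl | rfl | rfl | rfl
      · exact at_vertex a b d hab hcd (Or.inr r1) (Or.inr r2)
      · exact at_vertex a b c hab hcd.symm (Or.inr r1) (Or.inr r2')
      · exact at_vertex b a d hab.symm hcd (Or.inr r1') (Or.inr r2)
      · exact at_vertex b a c hab.symm hcd.symm (Or.inr r1') (Or.inr r2')

theorem ch_subset {W : Type} {H : SimpleGraph W} {A : AtomLabel W} (hA : ValidAtom H A) :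
    ch H A ⊆ basicAtoms H := by
  rcases A with e | ⟨a, b⟩ | e | a | T <;> intro x hx <;> simp only [ch] at hx <;>
    simp only [ValidAtom] at hA <;> simp only [basicAtoms] <;>
    rcases x with e' | ⟨a', b'⟩ | e' | a' | T' <;> simp_all

/-- The (optional) name of the edge of `H'` of an atom. -/
def nm {W : Type} : AtomLabel W → Option (EdgeName W)
  | .half u v => some (Sum.inr (s(u, v), u))
  | .full e => some (Sum.inl e)
  | _ => none

theorem nm_inj {W : Type} {A B : AtomLabel W} {m : EdgeName W} (hA : nm A = some m)
    (hB : nm B = some m) : A = B := by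
  rcases A with e | ⟨a, b⟩ | e | a | T <;> rcases B with e' | ⟨a', b'⟩ | e' | a' | T' <;>
    simp [nm] at hA hB
  · subst hA
    simp at hB
    grind
  · subst hA; simp at hB
  · subst hA; simp at hB
  · subst hA; simp at hB; rw [hB]

theorem mem_matchOf {W : Type} {𝒜 : Set (AtomLabel W)} {m : EdgeName W} :
    m ∈ matchOf 𝒜 ↔ ∃ A ∈ 𝒜, nm A = some m := by
  constructor
  · rintro (⟨e, he, rfl⟩ | ⟨u, v, h, rfl⟩)
    · exact ⟨_, he, rfl⟩
    · exact ⟨_, h, rfl⟩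
  · rintro ⟨A, hA, h⟩
    rcases A with e | ⟨a, b⟩ | e | a | T <;> simp [nm] at h
    · exact Or.inr ⟨a, b, hA, h.symm⟩
    · exact Or.inl ⟨e, hA, h.symm⟩

theorem nm_ch {W : Type} {H : SimpleGraph W} {A : AtomLabel W} {m : EdgeName W}
    (h : nm A = some m) {x : W ⊕ Sym2 W} (hx : x ∈ enameToSym m) :
    Sum.elim AtomLabel.vert AtomLabel.bot x ∈ ch H A := by
  rcases A with e | ⟨a, b⟩ | e | a | T <;> simp [nm] at h <;> subst h
  · simp [enameToSym] at hx
    rcases hx with rfl | rfl <;> simp [ch]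
  · simp [enameToSym] at hx
    obtain ⟨u, hu, rfl⟩ := hx
    simp [ch, hu]

theorem matching {W : Type} {H : SimpleGraph W} {𝒜 : Set (AtomLabel W)}
    (hvalid : ∀ a ∈ 𝒜, ValidAtom H a) (hindep : IndepFamily H 𝒜) :
    IsMatchingIn H (matchOf 𝒜) := by
  refine ⟨?_, ?_⟩
  · rintro m (⟨e, he, rfl⟩ | ⟨u, v, h, rfl⟩)
    · have := hvalid _ he
      induction e with | _ u v =>
      have h : H.Adj u v := this
      simp [enameToSym, Hprime, h, h.ne]
    · have h : H.Adj u v := hvalid _ h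
      simp [enameToSym, Hprime, h]
  · intro m hm m' hm' hne x hx hx'
    obtain ⟨A, hA, h⟩ := mem_matchOf.1 hm
    obtain ⟨B, hB, h'⟩ := mem_matchOf.1 hm'
    have := ch_disj hvalid hindep hA hB (nm_ch h hx) (nm_ch h' hx')
    subst this
    rw [h] at h'
    exact hne (Option.some.inj h')

theorem sum_full {W : Type} [Finite W] {H : SimpleGraph W} (f : AtomLabel W → ℤ) {e : Sym2 W}
    (he : e ∈ H.edgeSet) :
    ∑ᶠ b ∈ ch H (.full e), f b = vertW f e + f (.bot e) + triSumW H f e := by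
  have : Finite (AtomLabel W) := finite_atomLabel
  simp only [ch]
  rw [finsum_mem_union _ (Set.toFinite _) (Set.toFinite _),
    finsum_mem_union _ (Set.toFinite _) (Set.toFinite _), finsum_mem_singleton,
    finsum_mem_image (by intro a _ b _ h; simpa using h),
    finsum_mem_image (by intro a _ b _ h; simpa using h), triSumW, ← add_assoc]
  · congr 2
    induction e with | _ u v =>
    have h : u ≠ v := H.ne_of_adj he
    have : {x | x ∈ s(u, v)} = {u, v} := by ext; simp
    rw [this, finsum_mem_pair h]; rfl
  · rw [Set.disjoint_left]; simp
  · rw [Set.disjoint_left]; simp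

theorem sum_half {W : Type} [Finite W] {H : SimpleGraph W} (f : AtomLabel W → ℤ) (u v : W) :
    ∑ᶠ b ∈ ch H (.half u v), f b = f (.vert u) + f (.bot s(u, v)) := by
  simp only [ch]
  rw [finsum_mem_pair (by simp)]

theorem sum_basic {W : Type} [Finite W] (H : SimpleGraph W) (f : AtomLabel W → ℤ) :
    ∑ᶠ b ∈ basicAtoms H, f b = aConst H f := by
  have : Finite (AtomLabel W) := finite_atomLabel
  simp only [basicAtoms]
  rw [finsum_mem_union _ (Set.toFinite _) (Set.toFinite _),
    finsum_mem_union _ (Set.toFinite _) (Set.toFinite _),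
    finsum_mem_image (by intro a _ b _ h; simpa using h),
    finsum_mem_image (by intro a _ b _ h; simpa using h),
    finsum_mem_image (by intro a _ b _ h; simpa using h), aConst, finsum_mem_univ]
  · rw [Set.disjoint_left]; simp
  · rw [Set.disjoint_left]
    rintro a (⟨u, -, rfl⟩ | ⟨e, -, rfl⟩) <;> simp

/-- The weight of the edge named by an atom, or zero. -/
def gW {W : Type} (H : SimpleGraph W) (f : AtomLabel W → ℤ) (A : AtomLabel W) : ℤ :=
  (nm A).elim 0 (wPrime H f)

theorem gW_eq {W : Type} [Finite W] {H : SimpleGraph W} (f : AtomLabel W → ℤ) {A : AtomLabel W}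
    (hA : ValidAtom H A) : f A = gW H f A + ∑ᶠ b ∈ ch H A, f b := by
  rcases A with e | ⟨a, b⟩ | e | a | T
  · simp [gW, nm, ch]
  · rw [sum_half]
    simp [gW, nm, wPrime, halfW]
  · rw [sum_full f hA]
    simp only [gW, nm, wPrime, Option.elim]
    ring
  · simp [gW, nm, ch]
  · simp [gW, nm, ch]

theorem sum_match {W : Type} [Finite W] (H : SimpleGraph W) (f : AtomLabel W → ℤ)
    (𝒜 : Set (AtomLabel W)) :
    ∑ᶠ m ∈ matchOf 𝒜, wPrime H f m = ∑ᶠ A ∈ 𝒜, gW H f A := by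
  have h1 : ∑ᶠ A ∈ 𝒜, gW H f A = ∑ᶠ A ∈ {A ∈ 𝒜 | (nm A).isSome}, gW H f A := by
    apply finsum_mem_inter_support_eq
    ext A
    simp only [Set.mem_inter_iff, Function.mem_support, Set.mem_setOf_eq]
    cases h : nm A <;> simp [gW, h]
  rw [h1]
  symm
  have hs : ∀ A ∈ {A ∈ 𝒜 | (nm A).isSome}, ∃ m, nm A = some m :=
    fun A hA => Option.isSome_iff_exists.1 hA.2
  by_cases hW : Nonempty (EdgeName W)
  · obtain ⟨m0⟩ := hW
    refine finsum_mem_eq_of_bijOn (fun A => (nm A).getD m0) ⟨?_, ?_, ?_⟩ ?_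
    · intro A hA
      obtain ⟨m, hm⟩ := hs A hA
      exact mem_matchOf.2 ⟨A, hA.1, by simp [hm]⟩
    · intro A hA B hB h
      obtain ⟨m, hm⟩ := hs A hA
      obtain ⟨m', hm'⟩ := hs B hB
      simp only [hm, hm', Option.getD_some] at h
      subst h
      exact nm_inj hm hm'
    · intro m hm
      obtain ⟨A, hA, h⟩ := mem_matchOf.1 hm
      exact ⟨A, ⟨hA, by simp [h]⟩, by simp [h]⟩
    · intro A hA
      obtain ⟨m, hm⟩ := hs A hA
      simp [gW, hm]
  · have e1 : {A ∈ 𝒜 | (nm A).isSome} = ∅ := by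
      ext A
      constructor
      · intro hA
        obtain ⟨m, -⟩ := hs A hA
        exact hW ⟨m⟩
      · simp
    have e2 : matchOf 𝒜 = ∅ := by
      ext m
      exact (hW ⟨m⟩).elim
    rw [e1, e2]; simp

theorem sum_ch {W : Type} [Finite W] {H : SimpleGraph W} {f : AtomLabel W → ℤ}
    (hf : ∀ A, 0 ≤ f A) {𝒜 : Set (AtomLabel W)}
    (hvalid : ∀ a ∈ 𝒜, ValidAtom H a) (hindep : IndepFamily H 𝒜) :
    ∑ᶠ A ∈ 𝒜, ∑ᶠ b ∈ ch H A, f b ≤ aConst H f := by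
  have : Finite (AtomLabel W) := finite_atomLabel
  rw [← sum_basic, ← finsum_mem_biUnion ?_ (Set.toFinite _) (fun _ _ => Set.toFinite _)]
  · have hsub : (⋃ x ∈ 𝒜, ch H x) ⊆ basicAtoms H :=
      Set.iUnion₂_subset fun A hA => ch_subset (hvalid A hA)
    rw [← finsum_mem_add_sdiff hsub (Set.toFinite _)]
    have : 0 ≤ ∑ᶠ b ∈ basicAtoms H \ ⋃ x ∈ 𝒜, ch H x, f b :=
      finsum_nonneg fun b => finsum_nonneg fun _ => hf b
    linarith
  · intro A hA B hB hne
    exact Set.disjoint_left.2 fun b h1 h2 => hne (ch_disj hvalid hindep hA hB h1 h2)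

/-- if `𝒜` is an independent family of atoms of an extended strip
decomposition `(H, η)` of `G`, then `M(𝒜)` is a matching in `H'` and
`w'(M(𝒜)) ≥ -a + Σ_{A ∈ 𝒜} w(I(A))`. -/
theorem stmt8 {V W : Type} [Fintype V] [Fintype W] (G : SimpleGraph V) (H : SimpleGraph W)
    (D : ESD G H) (w : V → ℕ) (Ifun : AtomLabel W → Set V)
    (hsub : ∀ a, ValidAtom H a → Ifun a ⊆ D.atomSet a)
    (hind : ∀ a, ValidAtom H a → ∀ x ∈ Ifun a, ∀ y ∈ Ifun a, ¬ G.Adj x y)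
    (𝒜 : Set (AtomLabel W)) (hvalid : ∀ a ∈ 𝒜, ValidAtom H a)
    (hindep : IndepFamily H 𝒜) :
    IsMatchingIn H (matchOf 𝒜) ∧
      -(aConst H (wIat w Ifun)) + (∑ᶠ a ∈ 𝒜, wIat w Ifun a) ≤
        ∑ᶠ m ∈ matchOf 𝒜, wPrime H (wIat w Ifun) m := by
  refine ⟨matching hvalid hindep, ?_⟩
  have : Finite (AtomLabel W) := finite_atomLabel
  set f := wIat w Ifun with hfdef
  have hf : ∀ A, 0 ≤ f A := fun A => by simp [hfdef, wIat]
  have h1 : ∑ᶠ a ∈ 𝒜, f a = ∑ᶠ a ∈ 𝒜, (gW H f a + ∑ᶠ b ∈ ch H a, f b) :=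
    finsum_mem_congr rfl fun a ha => gW_eq f (hvalid a ha)
  rw [finsum_mem_add_distrib (Set.toFinite _)] at h1
  have h2 := sum_ch hf hvalid hindep
  rw [sum_match, h1]
  linarith

end Paper
end
end

section
/- Let G be a graph with weight function w, let (H,η) be an extended strip decomposition of G, and for every atom A of (H,η) let I(A) ⊆ A be given; let H', w', and a be as defined. If M is a matching in H', then A(M) is an independent family of atoms of (H,η) and Σ_{A ∈ A(M)} w(I(A)) = a + w'(M). -/
noncomputable section

namespace Paper

/-- The family `𝒜(M)` of atoms associated with a set `M` of edges of `H'`: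
`A_e^{uv}` for `e ∈ M`; `A_e^u` for `x_e u ∈ M`; `A_e^⊥` for edges `e` with none of
`e, x_e u, x_e v` in `M`; `A_u` for vertices `u` of `H` covered by no edge of `M`; and
`A_T` for triangles `T` none of whose edges is in `M`. -/
def atomsOfMatch {W : Type} (H : SimpleGraph W) (M : Set (EdgeName W)) :
    Set (AtomLabel W) :=
  {a | (∃ e, Sum.inl e ∈ M ∧ a = AtomLabel.full e) ∨
       (∃ u v, H.Adj u v ∧ (Sum.inr (s(u, v), u) : EdgeName W) ∈ M ∧
          a = AtomLabel.half u v) ∨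
       (∃ e ∈ H.edgeSet, Sum.inl e ∉ M ∧ (∀ u ∈ e, (Sum.inr (e, u) : EdgeName W) ∉ M) ∧
          a = AtomLabel.bot e) ∨
       (∃ u : W, (∀ m ∈ M, (Sum.inl u : W ⊕ Sym2 W) ∉ enameToSym m) ∧
          a = AtomLabel.vert u) ∨
       (∃ T, IsTriangle H T ∧
          (∀ u v, u ∈ T → v ∈ T → H.Adj u v → (Sum.inl s(u, v) : EdgeName W) ∉ M) ∧
          a = AtomLabel.tri T)}

theorem h_split {ι α : Type} [Finite ι] [Finite α] (S : Set α) (M : Set ι) (R : ι → α → Prop)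
    (g : α → ℤ) (hR : ∀ m ∈ M, ∀ m' ∈ M, m ≠ m' → ∀ x ∈ S, R m x → ¬ R m' x) :
    ∑ᶠ x ∈ S, g x = ∑ᶠ x ∈ {x | x ∈ S ∧ ∀ m ∈ M, ¬ R m x}, g x +
      ∑ᶠ m ∈ M, ∑ᶠ x ∈ {x | x ∈ S ∧ R m x}, g x := by
  rw [← finsum_mem_biUnion, ← finsum_mem_union]
  · refine finsum_mem_congr ?_ fun _ _ => rfl
    · ext x
      simp only [Set.mem_union, Set.mem_setOf_eq, Set.mem_iUnion]
      by_cases h : ∃ m ∈ M, R m x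
      · grind
      · grind
  · rw [Set.disjoint_left]
    intro x hx hx'
    simp only [Set.mem_setOf_eq, Set.mem_iUnion] at hx hx'
    grind
  · exact Set.toFinite _
  · exact Set.toFinite _
  · intro m hm m' hm' hne
    rw [Function.onFun, Set.disjoint_left]
    intro x hx hx'
    exact hR m hm m' hm' hne x hx.1 hx.2 hx'.2
  · exact Set.toFinite _
  · intro i _
    exact Set.toFinite _

theorem h_inl {W : Type} (H : SimpleGraph W) (e : Sym2 W) :
    enameToSym (Sum.inl e) ∈ (Hprime H).edgeSet ↔ e ∈ H.edgeSet := by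
  induction e with
  | _ a b =>
    simp only [enameToSym, Sym2.map_mk, SimpleGraph.mem_edgeSet, Hprime, SimpleGraph.fromRel_adj]
    constructor
    · rintro ⟨_, h | h⟩
      · exact h
      · exact h.symm
    · intro h
      exact ⟨fun h' => h.ne (Sum.inl.inj h'), Or.inl h⟩

theorem h_inr {W : Type} (H : SimpleGraph W) (e : Sym2 W) (u : W) :
    enameToSym (Sum.inr (e, u)) ∈ (Hprime H).edgeSet ↔ e ∈ H.edgeSet ∧ u ∈ e := by
  simp [enameToSym, SimpleGraph.mem_edgeSet, Hprime, SimpleGraph.fromRel_adj]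

theorem h_mem_inl {W : Type} (e : Sym2 W) (u : W) :
    (Sum.inl u : W ⊕ Sym2 W) ∈ enameToSym (Sum.inl e) ↔ u ∈ e := by
  simp [enameToSym, Sym2.mem_map]

theorem h_mem_inr {W : Type} (e : Sym2 W) (u v : W) :
    (Sum.inl u : W ⊕ Sym2 W) ∈ enameToSym (Sum.inr (e, v)) ↔ u = v := by
  simp [enameToSym]

theorem h_memx {W : Type} (e e' : Sym2 W) (v : W) :
    (Sum.inr e : W ⊕ Sym2 W) ∈ enameToSym (Sum.inr (e', v)) ↔ e = e' := by
  simp [enameToSym]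

section
variable {W : Type} {H : SimpleGraph W} {M : Set (EdgeName W)}

theorem h_full (hM : IsMatchingIn H M) (e : Sym2 W) :
    AtomLabel.full e ∈ atomsOfMatch H M ↔ Sum.inl e ∈ M := by
  simp [atomsOfMatch]

theorem h_half (hM : IsMatchingIn H M) (u v : W) :
    AtomLabel.half u v ∈ atomsOfMatch H M ↔ (Sum.inr (s(u, v), u) : EdgeName W) ∈ M := by
  simp only [atomsOfMatch, Set.mem_setOf_eq]
  constructor
  · rintro (⟨e, _, h⟩ | ⟨u', v', _, h1, h⟩ | ⟨e, _, _, _, h⟩ | ⟨_, _, h⟩ | ⟨_, _, _, h⟩) <;>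
      simp_all
  · intro h
    exact Or.inr (Or.inl ⟨u, v, ((h_inr H _ _).1 (hM.1 _ h)).1, h, rfl⟩)

theorem h_bot (e : Sym2 W) :
    AtomLabel.bot e ∈ atomsOfMatch H M ↔ e ∈ H.edgeSet ∧ Sum.inl e ∉ M ∧
      (∀ u ∈ e, (Sum.inr (e, u) : EdgeName W) ∉ M) := by
  simp [atomsOfMatch]

theorem h_vert (u : W) :
    AtomLabel.vert u ∈ atomsOfMatch H M ↔
      (∀ m ∈ M, (Sum.inl u : W ⊕ Sym2 W) ∉ enameToSym m) := by
  simp only [atomsOfMatch, Set.mem_setOf_eq]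
  constructor
  · rintro (⟨e, _, h⟩ | ⟨u', v', _, h1, h⟩ | ⟨e, _, _, _, h⟩ | ⟨_, h1, h⟩ | ⟨_, _, _, h⟩) <;>
      try cases h
    exact h1
  · intro h
    exact Or.inr (Or.inr (Or.inr (Or.inl ⟨u, h, rfl⟩)))

theorem h_tri (T : Set W) :
    AtomLabel.tri T ∈ atomsOfMatch H M ↔ IsTriangle H T ∧
      (∀ u v, u ∈ T → v ∈ T → H.Adj u v → (Sum.inl s(u, v) : EdgeName W) ∉ M) := by
  simp [atomsOfMatch]

theorem h_valid (hM : IsMatchingIn H M) : ∀ a ∈ atomsOfMatch H M, ValidAtom H a := by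
  rintro a (⟨e, he, rfl⟩ | ⟨u', v', h0, h1, rfl⟩ | ⟨e, h0, _, _, rfl⟩ | ⟨_, h1, rfl⟩ | ⟨_, h0, _, rfl⟩)
  · exact (h_inl H e).1 (hM.1 _ he)
  · exact h0
  · exact h0
  · trivial
  · exact h0

/-- the edge name behind a half/full atom at endpoint u is a member of M and contains u -/
theorem h_key (hM : IsMatchingIn H M) {u v : W} {a : AtomLabel W} (ha : a ∈ atomsOfMatch H M)
    (h : a = AtomLabel.half u v ∨ a = AtomLabel.full s(u, v)) :
    ∃ m ∈ M, (Sum.inl u : W ⊕ Sym2 W) ∈ enameToSym m ∧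
      (m = Sum.inr (s(u, v), u) ∧ a = AtomLabel.half u v ∨
        m = Sum.inl s(u, v) ∧ a = AtomLabel.full s(u, v)) := by
  rcases h with rfl | rfl
  · exact ⟨_, (h_half hM u v).1 ha, (h_mem_inr _ _ _).2 rfl, Or.inl ⟨rfl, rfl⟩⟩
  · exact ⟨_, (h_full hM _).1 ha, (h_mem_inl _ _).2 (by simp), Or.inr ⟨rfl, rfl⟩⟩

theorem h_uniq (hM : IsMatchingIn H M) {m m' : EdgeName W} (hm : m ∈ M) (hm' : m' ∈ M)
    {x} (hx : x ∈ enameToSym m) (hx' : x ∈ enameToSym m') : m = m' := by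
  by_contra hne
  exact hM.2 m hm m' hm' hne x hx hx'

theorem h_quad (hM : IsMatchingIn H M) {u v : W} {a b : AtomLabel W} (huv : H.Adj u v)
    (ha : a ∈ atomsOfMatch H M) (hb : b ∈ atomsOfMatch H M) (qa : a ∈ Quad u v)
    (qb : b ∈ Quad u v) : a = b := by
  have hf := h_full hM s(u, v)
  have h1 := h_half hM u v
  have h2 := h_half hM v u
  have h3 := h_bot (H := H) (M := M) s(u, v)
  rw [Sym2.eq_swap] at h2
  have e1 : (Sum.inr (s(u, v), u) : EdgeName W) ∈ M → (Sum.inr (s(u, v), v) : EdgeName W) ∉ M := by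
    intro p q
    have := h_uniq hM p q (x := Sum.inr s(u, v)) ((h_memx _ _ _).2 rfl) ((h_memx _ _ _).2 rfl)
    simp at this
    exact huv.ne this
  have e2 : (Sum.inr (s(u, v), u) : EdgeName W) ∈ M → (Sum.inl s(u, v) : EdgeName W) ∉ M := by
    intro p q
    have := h_uniq hM p q (x := Sum.inl u) ((h_mem_inr _ _ _).2 rfl) ((h_mem_inl _ _).2 (by simp))
    simp at this
  have e3 : (Sum.inr (s(u, v), v) : EdgeName W) ∈ M → (Sum.inl s(u, v) : EdgeName W) ∉ M := by
    intro p q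
    have := h_uniq hM p q (x := Sum.inl v) ((h_mem_inr _ _ _).2 rfl) ((h_mem_inl _ _).2 (by simp))
    simp at this
  have m1 : u ∈ s(u, v) := by simp
  have m2 : v ∈ s(u, v) := by simp
  simp only [Quad, Set.mem_insert_iff, Set.mem_singleton_iff] at qa qb
  rcases qa with rfl | rfl | rfl | rfl <;> rcases qb with rfl | rfl | rfl | rfl <;> first
    | rfl
    | (exfalso; grind)

theorem h_indep (hM : IsMatchingIn H M) : IndepFamily H (atomsOfMatch H M) := by
  rintro a ha b hb (⟨u, v, huv, hne, qa, qb⟩ | ⟨u, v, huv, (⟨h, rfl⟩ | ⟨h, rfl⟩)⟩ |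
    ⟨u, v, v', h1, h2, hne, h, h'⟩ | ⟨u, v, T, huv, hT, hu, hv, (⟨rfl, rfl⟩ | ⟨rfl, rfl⟩)⟩)
  · exact hne (h_quad hM huv ha hb qa qb)
  · obtain ⟨m, hm, hx, _⟩ := h_key hM ha h
    exact (h_vert u).1 hb m hm hx
  · obtain ⟨m, hm, hx, _⟩ := h_key hM hb h
    exact (h_vert u).1 ha m hm hx
  · obtain ⟨m, hm, hx, hh⟩ := h_key hM ha h
    obtain ⟨m', hm', hx', hh'⟩ := h_key hM hb h'
    have := h_uniq hM hm hm' hx hx'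
    subst this
    rcases hh with ⟨rfl, _⟩ | ⟨rfl, _⟩ <;> rcases hh' with ⟨h, _⟩ | ⟨h, _⟩ <;> simp at h <;> grind
  · exact ((h_tri T).1 hb).2 u v hu hv huv ((h_full hM _).1 ha)
  · exact ((h_tri T).1 ha).2 u v hu hv huv ((h_full hM _).1 hb)

open scoped Classical in
/-- atom of an edge name -/
def atomOf {W : Type} : EdgeName W → AtomLabel W
  | Sum.inl e => AtomLabel.full e
  | Sum.inr (e, u) => if h : u ∈ e then AtomLabel.half u (Sym2.Mem.other h) else AtomLabel.vert u

theorem h_atomOf_inr (u v : W) : atomOf (Sum.inr (s(u, v), u)) = AtomLabel.half u v := by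
  have h : u ∈ s(u, v) := by simp
  simp only [atomOf, dif_pos h]
  have := Sym2.other_spec h
  congr 1
  exact Sym2.congr_right.1 this

theorem h_halfW (f : AtomLabel W → ℤ) (u v : W) : halfW f u s(u, v) = f (AtomLabel.half u v) := by
  simp [halfW]

theorem h_rep (hM : IsMatchingIn H M) {m : EdgeName W} (hm : m ∈ M) :
    (∃ u v, H.Adj u v ∧ m = Sum.inl s(u, v)) ∨ (∃ u v, H.Adj u v ∧ m = Sum.inr (s(u, v), u)) := by
  have h := hM.1 m hm
  rcases m with e | ⟨e, u⟩
  · rw [h_inl] at h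
    induction e with
    | _ a b => exact Or.inl ⟨a, b, h, rfl⟩
  · rw [h_inr] at h
    obtain ⟨h1, h2⟩ := h
    obtain ⟨v, rfl⟩ := h2
    exact Or.inr ⟨u, v, h1, rfl⟩

theorem h_inj (hM : IsMatchingIn H M) : Set.InjOn atomOf M := by
  intro m hm m' hm' h
  rcases h_rep hM hm with ⟨u, v, huv, rfl⟩ | ⟨u, v, huv, rfl⟩ <;>
  rcases h_rep hM hm' with ⟨u', v', huv', rfl⟩ | ⟨u', v', huv', rfl⟩
  · simpa [atomOf] using h
  · rw [h_atomOf_inr] at h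
    simp [atomOf] at h
  · rw [h_atomOf_inr] at h
    simp [atomOf] at h
  · rw [h_atomOf_inr, h_atomOf_inr] at h
    cases h
    rfl

theorem h_atoms (hM : IsMatchingIn H M) : atomsOfMatch H M =
    atomOf '' M ∪
    (AtomLabel.bot '' {e | e ∈ H.edgeSet ∧ ∀ m ∈ M, ¬ (m = Sum.inl e ∨ ∃ u, m = Sum.inr (e, u))} ∪
    (AtomLabel.vert '' {u | u ∈ Set.univ ∧ ∀ m ∈ M, ¬ (Sum.inl u : W ⊕ Sym2 W) ∈ enameToSym m} ∪
    AtomLabel.tri '' {T | T ∈ {T | IsTriangle H T} ∧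
      ∀ m ∈ M, ¬ ∃ e, m = Sum.inl e ∧ ∀ x ∈ e, x ∈ T})) := by
  ext a
  simp only [Set.mem_union]
  constructor
  · rintro (⟨e, he, rfl⟩ | ⟨u, v, h0, h1, rfl⟩ | ⟨e, h0, h1, h2, rfl⟩ | ⟨u, h1, rfl⟩ | ⟨T, h0, h1, rfl⟩)
    · exact Or.inl ⟨_, he, rfl⟩
    · exact Or.inl ⟨_, h1, h_atomOf_inr u v⟩
    · refine Or.inr (Or.inl ⟨e, ⟨h0, ?_⟩, rfl⟩)
      rintro m hm (rfl | ⟨u, rfl⟩)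
      · exact h1 hm
      · exact h2 u ((h_inr H e u).1 (hM.1 _ hm)).2 hm
    · exact Or.inr (Or.inr (Or.inl ⟨u, ⟨trivial, h1⟩, rfl⟩))
    · refine Or.inr (Or.inr (Or.inr ⟨T, ⟨h0, ?_⟩, rfl⟩))
      rintro m hm ⟨e, rfl, he⟩
      rcases h_rep hM hm with ⟨u, v, huv, h⟩ | ⟨u, v, huv, h⟩
      · cases h
        exact h1 u v (he u (by simp)) (he v (by simp)) huv hm
      · cases h
  · rintro (⟨m, hm, rfl⟩ | ⟨e, ⟨h0, h1⟩, rfl⟩ | ⟨u, ⟨_, h1⟩, rfl⟩ | ⟨T, ⟨h0, h1⟩, rfl⟩)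
    · rcases h_rep hM hm with ⟨u, v, huv, rfl⟩ | ⟨u, v, huv, rfl⟩
      · exact (h_full hM _).2 hm
      · rw [h_atomOf_inr]
        exact (h_half hM _ _).2 hm
    · exact (h_bot e).2 ⟨h0, fun h => h1 _ h (Or.inl rfl), fun u _ h => h1 _ h (Or.inr ⟨u, rfl⟩)⟩
    · exact (h_vert u).2 h1
    · refine (h_tri T).2 ⟨h0, fun u v hu hv huv h => h1 _ h ⟨_, rfl, ?_⟩⟩
      intro x hx
      rcases Sym2.mem_iff.1 hx with rfl | rfl <;> assumption

theorem h_triU (hM : IsMatchingIn H M) : ∀ m ∈ M, ∀ m' ∈ M, m ≠ m' →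
    ∀ T ∈ {T | IsTriangle H T}, (∃ e, m = Sum.inl e ∧ ∀ x ∈ e, x ∈ T) →
      ¬ (∃ e, m' = Sum.inl e ∧ ∀ x ∈ e, x ∈ T) := by
  rintro m hm m' hm' hne T ⟨p, q, r, -, -, -, rfl⟩ ⟨e, rfl, he⟩ ⟨e', rfl, he'⟩
  rcases h_rep hM hm with ⟨u, v, huv, h⟩ | ⟨u, v, huv, h⟩
  swap
  · cases h
  rcases h_rep hM hm' with ⟨u', v', huv', h'⟩ | ⟨u', v', huv', h'⟩
  swap
  · cases h'
  cases h
  cases h'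
  have key : ∀ x, x ∈ s(u, v) → x ∉ s(u', v') := by
    intro x hx hx'
    exact hne (h_uniq hM hm hm' ((h_mem_inl _ x).2 hx) ((h_mem_inl _ x).2 hx'))
  have a1 := he u (by simp)
  have a2 := he v (by simp)
  have a3 := he' u' (by simp)
  have a4 := he' v' (by simp)
  have k1 := key u (by simp)
  have k2 := key v (by simp)
  have n1 := huv.ne
  have n2 := huv'.ne
  simp only [Set.mem_insert_iff, Set.mem_singleton_iff, Sym2.mem_iff] at a1 a2 a3 a4 k1 k2
  grind

theorem h_sum [Finite W] (hM : IsMatchingIn H M) (f : AtomLabel W → ℤ) :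
    (∑ᶠ a ∈ atomsOfMatch H M, f a) = aConst H f + ∑ᶠ m ∈ M, wPrime H f m := by
  have hfin : M.Finite := Set.toFinite _
  rw [h_atoms hM, finsum_mem_union _ (Set.toFinite _) (Set.toFinite _),
    finsum_mem_union _ (Set.toFinite _) (Set.toFinite _),
    finsum_mem_union _ (Set.toFinite _) (Set.toFinite _),
    finsum_mem_image (h_inj hM), finsum_mem_image (fun _ _ _ _ h => by cases h; rfl),
    finsum_mem_image (fun _ _ _ _ h => by cases h; rfl),
    finsum_mem_image (fun _ _ _ _ h => by cases h; rfl), aConst, ← finsum_mem_univ (fun u : W => f (AtomLabel.vert u)),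
    h_split Set.univ M (fun m u => (Sum.inl u : W ⊕ Sym2 W) ∈ enameToSym m)
      (fun u => f (AtomLabel.vert u)) (fun m hm m' hm' hne x _ h => hM.2 m hm m' hm' hne _ h),
    h_split H.edgeSet M (fun m e => m = Sum.inl e ∨ ∃ u, m = Sum.inr (e, u))
      (fun e => f (AtomLabel.bot e)),
    h_split {T | IsTriangle H T} M (fun m T => ∃ e, m = Sum.inl e ∧ ∀ x ∈ e, x ∈ T)
      (fun T => f (AtomLabel.tri T)) (h_triU hM)]
  · have key : ∑ᶠ m ∈ M, f (atomOf m) =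
        ∑ᶠ m ∈ M, ∑ᶠ x ∈ {x | x ∈ Set.univ ∧ (Sum.inl x : W ⊕ Sym2 W) ∈ enameToSym m},
          f (AtomLabel.vert x) +
        ∑ᶠ m ∈ M, ∑ᶠ x ∈ {x | x ∈ H.edgeSet ∧ (m = Sum.inl x ∨ ∃ u, m = Sum.inr (x, u))},
          f (AtomLabel.bot x) +
        ∑ᶠ m ∈ M, ∑ᶠ x ∈ {x | x ∈ {T | IsTriangle H T} ∧ ∃ e, m = Sum.inl e ∧ ∀ y ∈ e, y ∈ x},
          f (AtomLabel.tri x) + ∑ᶠ m ∈ M, wPrime H f m := by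
      rw [← finsum_mem_add_distrib hfin, ← finsum_mem_add_distrib hfin,
        ← finsum_mem_add_distrib hfin]
      refine finsum_mem_congr rfl fun m hm => ?_
      rcases h_rep hM hm with ⟨u, v, huv, rfl⟩ | ⟨u, v, huv, rfl⟩
      · have s1 : {x | x ∈ Set.univ ∧ (Sum.inl x : W ⊕ Sym2 W) ∈ enameToSym (Sum.inl s(u, v))} =
            {u, v} := by
          ext x
          simp [h_mem_inl]
        have s2 : {x | x ∈ H.edgeSet ∧ ((Sum.inl s(u, v) : EdgeName W) = Sum.inl x ∨
            ∃ y, (Sum.inl s(u, v) : EdgeName W) = Sum.inr (x, y))} = {s(u, v)} := by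
          ext x
          simp only [Set.mem_setOf_eq, Set.mem_singleton_iff, Sum.inl.injEq, reduceCtorEq,
            exists_false, or_false]
          constructor
          · rintro ⟨_, h⟩
            exact h.symm
          · rintro rfl
            exact ⟨huv, rfl⟩
        have s3 : {x | x ∈ {T | IsTriangle H T} ∧ ∃ e, (Sum.inl s(u, v) : EdgeName W) = Sum.inl e ∧
            ∀ y ∈ e, y ∈ x} = {T : Set W | IsTriangle H T ∧ ∀ x ∈ s(u, v), x ∈ T} := by
          ext x
          simp
        rw [s1, s2, s3, finsum_mem_pair huv.ne, finsum_mem_singleton]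
        simp only [wPrime, triSumW, vertW, atomOf, Sym2.lift_mk]
        ring
      · have s1 : {x | x ∈ Set.univ ∧ (Sum.inl x : W ⊕ Sym2 W) ∈ enameToSym (Sum.inr (s(u, v), u))} =
            {u} := by
          ext x
          simp [h_mem_inr]
        have s2 : {x | x ∈ H.edgeSet ∧ ((Sum.inr (s(u, v), u) : EdgeName W) = Sum.inl x ∨
            ∃ y, (Sum.inr (s(u, v), u) : EdgeName W) = Sum.inr (x, y))} = {s(u, v)} := by
          ext x
          simp only [Set.mem_setOf_eq, Set.mem_singleton_iff, Sum.inr.injEq, reduceCtorEq,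
            false_or, Prod.mk.injEq]
          constructor
          · rintro ⟨_, _, h, _⟩
            exact h.symm
          · rintro rfl
            exact ⟨huv, u, rfl, rfl⟩
        have s3 : {x | x ∈ {T | IsTriangle H T} ∧
            ∃ e, (Sum.inr (s(u, v), u) : EdgeName W) = Sum.inl e ∧ ∀ y ∈ e, y ∈ x} = ∅ := by
          ext x
          simp
        rw [s1, s2, s3, finsum_mem_singleton, finsum_mem_singleton, finsum_mem_empty,
          h_atomOf_inr]
        simp only [wPrime, h_halfW]
        ring
    rw [key]
    ring
  · rintro m hm m' hm' hne e he h h'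
    have huse : ∀ m ∈ M, (m = Sum.inl e ∨ ∃ u, m = Sum.inr (e, u)) → m = Sum.inl e ∨
        ∃ u ∈ e, m = Sum.inr (e, u) := by
      rintro m hm (h | ⟨u, rfl⟩)
      · exact Or.inl h
      · exact Or.inr ⟨u, ((h_inr H e u).1 (hM.1 _ hm)).2, rfl⟩
    rcases huse m hm h with rfl | ⟨u, hu, rfl⟩ <;> rcases huse m' hm' h' with rfl | ⟨u', hu', rfl⟩
    · exact hne rfl
    · exact hM.2 _ hm _ hm' hne (Sum.inl u') ((h_mem_inl _ _).2 hu') ((h_mem_inr _ _ _).2 rfl)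
    · exact hM.2 _ hm _ hm' hne (Sum.inl u) ((h_mem_inr _ _ _).2 rfl) ((h_mem_inl _ _).2 hu)
    · exact hM.2 _ hm _ hm' hne (Sum.inr e) ((h_memx _ _ _).2 rfl) ((h_memx _ _ _).2 rfl)
  all_goals
    first
    | exact Set.toFinite _
    | (rw [Set.disjoint_left]
       rintro a ⟨x, hx, rfl⟩ h
       simp only [Set.mem_union, Set.mem_image, reduceCtorEq, and_false, exists_false,
         or_false] at h
       done)
    | (rw [Set.disjoint_left]
       rintro a ⟨m, hm, rfl⟩ h
       rcases h_rep hM hm with ⟨u, v, huv, rfl⟩ | ⟨u, v, huv, rfl⟩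
       · simp [atomOf] at h
       · rw [h_atomOf_inr] at h
         simp at h)

end

/-- if `M` is a matching in `H'`, then `𝒜(M)` is an independent family of
atoms of the extended strip decomposition `(H, η)` of `G`, and
`Σ_{A ∈ 𝒜(M)} w(I(A)) = a + w'(M)`. -/
theorem stmt9 {V W : Type} [Fintype V] [Fintype W] (G : SimpleGraph V) (H : SimpleGraph W)
    (D : ESD G H) (w : V → ℕ) (Ifun : AtomLabel W → Set V)
    (hsub : ∀ a, ValidAtom H a → Ifun a ⊆ D.atomSet a)
    (hind : ∀ a, ValidAtom H a → ∀ x ∈ Ifun a, ∀ y ∈ Ifun a, ¬ G.Adj x y)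
    (M : Set (EdgeName W)) (hM : IsMatchingIn H M) :
    (∀ a ∈ atomsOfMatch H M, ValidAtom H a) ∧
    IndepFamily H (atomsOfMatch H M) ∧
      (∑ᶠ a ∈ atomsOfMatch H M, wIat w Ifun a) =
        aConst H (wIat w Ifun) + ∑ᶠ m ∈ M, wPrime H (wIat w Ifun) m := by
  exact ⟨h_valid hM, h_indep hM, h_sum hM _⟩

end Paper
end
end
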